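/- arXiv:2212.07974 — 2 statements merged into one kernel-verified Lean document; each statement's English description precedes it below -/
import Mathlib

section
/- Let α ∈ [1/2, 1) and β ∈ [0, α], and let f(x) = φ(-α, β, -x). Then f has at most two inflection points in (0,∞): there do not exist three points 0 < x₁ < x₂ < x₃ each of which is an inflection point of f, where x₀ > 0 is called an inflection point of f if there exists ε > 0 such that f'' has one strict sign on (x₀ − ε, x₀) and the opposite strict sign on (x₀, x₀ + ε). -/
/-- The Wright function `φ(ρ, β, x) = ∑ x^n / (n! Γ(β + ρ n))`. -/
noncomputable def wright (ρ β x : ℝ) : ℝ :=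
  ∑' n : ℕ, x ^ n / ((n.factorial : ℝ) * Real.Gamma (β + ρ * n))

/-- `x₀` is an inflection point of `f`: on some punctured neighbourhood, `f''` has
one strict sign on the left of `x₀` and the opposite strict sign on the right. -/
def IsInflectionPoint (f : ℝ → ℝ) (x₀ : ℝ) : Prop :=
  ∃ ε > 0,
    ((∀ x ∈ Set.Ioo (x₀ - ε) x₀, deriv (deriv f) x < 0) ∧
      (∀ x ∈ Set.Ioo x₀ (x₀ + ε), 0 < deriv (deriv f) x)) ∨
    ((∀ x ∈ Set.Ioo (x₀ - ε) x₀, 0 < deriv (deriv f) x) ∧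
      (∀ x ∈ Set.Ioo x₀ (x₀ + ε), deriv (deriv f) x < 0))

namespace WrightAux
open MeasureTheory Set Filter Topology

lemma pow_le_linear (α c x : ℝ) (hα : 0 < α) (hα1 : α < 1) (hc : 0 < c) (hx : 0 ≤ x) :
    ∃ C : ℝ, ∀ r : ℝ, 0 < r → x * r ^ α ≤ c * r + C := by
  have h := (tendsto_rpow_neg_atTop (y := 1 - α) (by linarith)).const_mul x
  rw [mul_zero] at h
  obtain ⟨M, hM⟩ := eventually_atTop.1 (h.eventually (gt_mem_nhds hc))
  refine ⟨x * (max M 1) ^ α, fun r hr => ?_⟩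
  rcases le_total r (max M 1) with h1 | h1
  · have : x * r ^ α ≤ x * (max M 1) ^ α := by gcongr
    nlinarith [mul_pos hc hr]
  · have h2 := hM r (le_trans (le_max_left _ _) h1)
    have h3 : r ^ α = r ^ (-(1 - α)) * r := by
      rw [show α = -(1-α) + 1 by ring, Real.rpow_add hr, Real.rpow_one]; ring_nf
    rw [h3, ← mul_assoc]
    have h4 : 0 ≤ x * (max M 1) ^ α := by positivity
    nlinarith

lemma integrable_dom (α c x g : ℝ) (hα : 0 < α) (hα1 : α < 1) (hc : 0 < c) (hx : 0 ≤ x)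
    (hg : -1 < g) :
    IntegrableOn (fun r : ℝ => Real.exp (-c * r + x * r ^ α) * r ^ g) (Ioi 0) := by
  obtain ⟨C, hC⟩ := pow_le_linear α (c/2) x hα hα1 (by linarith) hx
  have h := (integrableOn_rpow_mul_exp_neg_mul_rpow (p := 1) (s := g) (b := c/2) hg (by norm_num) (by linarith)).const_mul (Real.exp C)
  refine Integrable.mono' h ?_ ?_
  · apply Measurable.aestronglyMeasurable; fun_prop
  · filter_upwards [ae_restrict_mem measurableSet_Ioi] with r hr
    have hr : 0 < r := hr
    have : Real.exp (-c * r + x * r ^ α) ≤ Real.exp C * Real.exp (-(c/2) * r) := by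
      rw [← Real.exp_add]; apply Real.exp_le_exp.2; linarith [hC r hr]
    have h0 := Real.rpow_nonneg hr.le g
    rw [Real.norm_of_nonneg (by positivity), Real.rpow_one]
    nlinarith

lemma gamma_integral (α g : ℝ) (n : ℕ) (hα : 0 < α) (hg : -1 < g) :
    IntegrableOn (fun r : ℝ => Real.exp (-r) * r ^ (α * n + g)) (Ioi 0) ∧
    ∫ r in Ioi (0:ℝ), Real.exp (-r) * r ^ (α * n + g) = Real.Gamma (α * n + (g + 1)) := by
  have hs : 0 < α * n + (g + 1) := by
    have : 0 ≤ α * (n:ℝ) := by positivity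
    linarith
  rw [Real.Gamma_eq_integral hs, show α * n + (g+1) - 1 = α * n + g by ring]
  refine ⟨?_, rfl⟩
  have := Real.GammaIntegral_convergent hs
  rwa [show α * n + (g+1) - 1 = α * n + g by ring] at this

lemma summable_gamma (α x g : ℝ) (hα : 0 < α) (hα1 : α < 1) (hx : 0 ≤ x) (hg : -1 < g) :
    Summable (fun n : ℕ => x ^ n / n.factorial * Real.Gamma (α * n + (g + 1))) := by
  have hI := integrable_dom α 1 x g hα hα1 one_pos hx hg
  refine summable_of_sum_range_le (c := ∫ r in Ioi (0:ℝ), Real.exp (-1 * r + x * r ^ α) * r ^ g) ?_ ?_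
  · intro n
    have : 0 < Real.Gamma (α * n + (g+1)) := Real.Gamma_pos_of_pos (by
      have : 0 ≤ α * (n:ℝ) := by positivity
      linarith)
    positivity
  · intro N
    have : ∀ n : ℕ, x ^ n / n.factorial * Real.Gamma (α * n + (g + 1)) = ∫ r in Ioi (0:ℝ), x ^ n / n.factorial * (Real.exp (-r) * r ^ (α * n + g)) := by
      intro n
      rw [integral_const_mul, (gamma_integral α g n hα hg).2]
    simp_rw [this]
    rw [← integral_finsetSum]
    · refine setIntegral_mono_on ?_ hI measurableSet_Ioi ?_
      · exact integrable_finsetSum _ fun n _ => (gamma_integral α g n hα hg).1.const_mul _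
      · intro r hr
        have hr : 0 < r := hr
        have h1 : ∀ n : ℕ, x ^ n / n.factorial * (Real.exp (-r) * r ^ (α * n + g)) = Real.exp (-r) * r ^ g * ((x * r ^ α) ^ n / n.factorial) := by
          intro n
          rw [Real.rpow_add hr, Real.rpow_mul hr.le, Real.rpow_natCast, mul_pow]; ring
        simp_rw [h1]
        rw [← Finset.mul_sum, Real.exp_add, neg_one_mul]
        have h2 := Real.sum_le_exp_of_nonneg (x := x * r ^ α) (by positivity) N
        have h3 : 0 ≤ Real.exp (-r) * r ^ g := by positivity
        nlinarith
    · intro n _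
      exact (gamma_integral α g n hα hg).1.const_mul _

lemma inv_gamma (s : ℝ) (hs : 0 < s) : (Real.Gamma (1 - s))⁻¹ = Real.Gamma s * Real.sin (Real.pi * s) / Real.pi := by
  have h := Real.Gamma_mul_Gamma_one_sub s
  have h0 := (Real.Gamma_pos_of_pos hs).ne'
  have hp := Real.pi_pos.ne'
  by_cases h1 : Real.sin (Real.pi * s) = 0
  · rw [h1, div_zero] at h
    have : Real.Gamma (1 - s) = 0 := by simpa [h0] using h
    rw [this, h1]; simp
  · have h2 : Real.Gamma (1-s) ≠ 0 := by
      intro h3; rw [h3, mul_zero] at h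
      exact (div_ne_zero hp h1) h.symm
    rw [eq_div_iff h1] at h
    rw [eq_div_iff hp, inv_mul_eq_div, div_eq_iff h2]
    linarith

lemma summable_wright (α b x : ℝ) (hα : 0 < α) (hα1 : α < 1) (hb : b < 1) :
    Summable (fun n : ℕ => |x| ^ n / ((n.factorial : ℝ) * |Real.Gamma (b + -α * n)|)) := by
  have h := summable_gamma α |x| (-b) hα hα1 (abs_nonneg x) (by linarith)
  refine Summable.of_nonneg_of_le (fun n => by positivity) (fun n => ?_) h
  have hs : 0 < α * n + (-b + 1) := by
    have : 0 ≤ α * (n:ℝ) := by positivity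
    linarith
  have h1 := inv_gamma _ hs
  rw [show 1 - (α * n + (-b + 1)) = b + -α * n by ring] at h1
  have h2 : |Real.Gamma (b + -α * n)|⁻¹ ≤ Real.Gamma (α * n + (-b + 1)) := by
    rw [← abs_inv, h1, abs_div, abs_mul, abs_of_pos (Real.Gamma_pos_of_pos hs), abs_of_pos Real.pi_pos]
    rw [div_le_iff₀ Real.pi_pos]
    have := Real.abs_sin_le_one (Real.pi * (α * n + (-b + 1)))
    have h4 := Real.Gamma_pos_of_pos hs
    have h5 := Real.pi_gt_three
    nlinarith
  rw [div_mul_eq_div_div, div_eq_mul_inv]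
  gcongr

lemma hasDerivAt_wright (α b x : ℝ) (hα : 0 < α) (hα1 : α < 1) (hb : b < 1) :
    HasDerivAt (wright (-α) b) (wright (-α) (b - α) x) x := by
  unfold wright
  have h := hasDerivAt_tsum_of_isPreconnected (𝕜 := ℝ)
    (u := fun n : ℕ => (n:ℝ) * (|x|+1) ^ (n-1) / ((n.factorial : ℝ) * |Real.Gamma (b + -α * n)|))
    (g := fun (n:ℕ) (y:ℝ) => y ^ n / ((n.factorial : ℝ) * Real.Gamma (b + -α * n)))
    (g' := fun (n:ℕ) (y:ℝ) => (n * y ^ (n-1)) / ((n.factorial : ℝ) * Real.Gamma (b + -α * n)))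
    (t := Metric.ball 0 (|x|+1)) (y := x) (y₀ := 0) ?_ Metric.isOpen_ball (Metric.isConnected_ball (by positivity)).isPreconnected
    ?_ ?_ (by simp; positivity) ?_ (by simp)
  · refine h.congr_deriv ?_
    rw [Summable.tsum_eq_zero_add]
    · simp only [Nat.cast_zero, zero_mul, zero_div, zero_add]
      congr 1; ext n
      rw [Nat.factorial_succ]
      push_cast
      rw [show b - α + -α * n = b + -α * (n+1) by ring]
      have : (n:ℝ) + 1 ≠ 0 := by positivity
      rw [mul_assoc ((n:ℝ)+1), mul_div_mul_left _ _ this]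
    · rw [← summable_nat_add_iff 1]
      have h2 := summable_wright α (b-α) x hα hα1 (by linarith)
      refine Summable.of_norm (h2.congr fun n => ?_)
      rw [Nat.factorial_succ]
      push_cast
      rw [show b - α + -α * n = b + -α * (n+1) by ring]
      have : (n:ℝ) + 1 ≠ 0 := by positivity
      rw [mul_assoc ((n:ℝ)+1), mul_div_mul_left _ _ this]
      simp [abs_mul]
  · rw [← summable_nat_add_iff 1]
    have h2 := summable_wright α (b-α) (|x|+1) hα hα1 (by linarith)
    refine (h2.congr fun n => ?_)
    rw [Nat.factorial_succ]
    push_cast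
    rw [show b - α + -α * n = b + -α * (n+1) by ring]
    have : (n:ℝ) + 1 ≠ 0 := by positivity
    rw [mul_assoc ((n:ℝ)+1), mul_div_mul_left _ _ this, abs_of_pos (by positivity : 0 < |x|+1)]
  · intro n y _
    exact (hasDerivAt_pow n y).div_const _
  · intro n y hy
    have hy : |y| < |x|+1 := by simpa using hy
    rw [norm_div, norm_mul, norm_mul, norm_pow]
    simp only [Real.norm_eq_abs, Nat.abs_cast]
    gcongr
  · refine summable_of_ne_finset_zero (s := {0}) ?_
    intro n hn
    have : n ≠ 0 := by simpa using hn
    simp [this]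

lemma deriv2_wright (α b x : ℝ) (hα : 0 < α) (hα1 : α < 1) (hb : b < 1) :
    deriv (deriv (fun x => wright (-α) b (-x))) x = wright (-α) (b - 2 * α) (-x) := by
  have h1 : deriv (fun x => wright (-α) b (-x)) = fun x => - wright (-α) (b - α) (-x) := by
    ext y
    have := (hasDerivAt_wright α b (-y) hα hα1 hb).comp y (hasDerivAt_neg y)
    rw [show (fun x => wright (-α) b (-x)) = wright (-α) b ∘ Neg.neg from rfl]
    rw [this.deriv]; ring
  rw [h1]
  have := ((hasDerivAt_wright α (b-α) (-x) hα hα1 (by linarith)).comp x (hasDerivAt_neg x)).neg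
  have h3 : deriv (fun x => - wright (-α) (b - α) (-x)) x = _ := this.deriv
  rw [h3]; rw [show b - α - α = b - 2 * α by ring]; ring

/-- the limiting contour integral equals the Wright function. -/
lemma ray_integral (α g x : ℝ) (hα : 0 < α) (hα1 : α < 1) (hg : 0 < g) :
    (∫ r in Ioi (0:ℝ), Complex.exp (r * Complex.exp (Real.pi * Complex.I) - x * (r ^ α : ℝ) * Complex.exp (α * Real.pi * Complex.I)) * (r ^ g : ℝ) * Complex.exp ((g+1) * Real.pi * Complex.I)).im
     = Real.pi * wright (-α) (-g) (-x) := by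
  have h := hasSum_integral_of_summable_integral_norm (μ := volume.restrict (Ioi (0:ℝ)))
    (F := fun (n:ℕ) (r:ℝ) => ((Real.exp (-r) * r ^ (α * n + g) : ℝ) : ℂ) * (((-x)^n / n.factorial : ℝ) * Complex.exp ((α * n + (g+1)) * Real.pi * Complex.I))) ?_ ?_
  · have h2 : (∫ r in Ioi (0:ℝ), ∑' n : ℕ, ((Real.exp (-r) * r ^ (α * n + g) : ℝ) : ℂ) * (((-x)^n / n.factorial : ℝ) * Complex.exp ((α * n + (g+1)) * Real.pi * Complex.I)))
      = (∫ r in Ioi (0:ℝ), Complex.exp (r * Complex.exp (Real.pi * Complex.I) - x * (r ^ α : ℝ) * Complex.exp (α * Real.pi * Complex.I)) * (r ^ g : ℝ) * Complex.exp ((g+1) * Real.pi * Complex.I)) := by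
      refine setIntegral_congr_fun measurableSet_Ioi fun r hr => ?_
      have hr : 0 < r := hr
      have h3 : HasSum (fun n : ℕ => (-(x * (r ^ α : ℝ) * Complex.exp (α * Real.pi * Complex.I))) ^ n / n.factorial)
        (Complex.exp (-(x * (r ^ α : ℝ) * Complex.exp (α * Real.pi * Complex.I)))) := by
        rw [Complex.exp_eq_exp_ℂ]; exact NormedSpace.expSeries_div_hasSum_exp _
      have h4 := h3.mul_left ((Real.exp (-r) : ℂ) * (r ^ g : ℝ) * Complex.exp ((g+1) * Real.pi * Complex.I))
      rw [sub_eq_add_neg, Complex.exp_add, Complex.exp_pi_mul_I]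
      rw [show Complex.exp (r * -1) = (Real.exp (-r) : ℂ) by push_cast; congr 1; ring]
      have h5 : ∀ n : ℕ, ((Real.exp (-r) * r ^ (α * n + g) : ℝ) : ℂ) * (((-x)^n / n.factorial : ℝ) * Complex.exp ((α * n + (g+1)) * Real.pi * Complex.I)) = ((Real.exp (-r) : ℂ) * (r ^ g : ℝ) * Complex.exp ((g+1) * Real.pi * Complex.I)) * ((-(x * (r ^ α : ℝ) * Complex.exp (α * Real.pi * Complex.I))) ^ n / n.factorial) := by
        intro n
        rw [Real.rpow_add hr, Real.rpow_mul hr.le, Real.rpow_natCast]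
        rw [show ((α * n + (g+1)) * Real.pi * Complex.I : ℂ) = n * (α * Real.pi * Complex.I) + (g+1) * Real.pi * Complex.I by ring]
        rw [Complex.exp_add, Complex.exp_nat_mul, ← neg_mul, ← neg_mul, mul_pow, mul_pow]
        push_cast
        ring
      simp_rw [h5]
      rw [h4.tsum_eq]
      ring
    rw [h2] at h
    have h6 := (Complex.hasSum_im h).tsum_eq
    rw [← h6, wright, ← tsum_mul_left]
    congr 1; ext n
    have hs : 0 < α * n + (g + 1) := by
      have : 0 ≤ α * (n:ℝ) := by positivity
      linarith
    rw [integral_mul_const, integral_complex_ofReal, (gamma_integral α g n hα (by linarith)).2]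
    have h7 := inv_gamma _ hs
    rw [show 1 - (α * n + (g + 1)) = -g + -α * n by ring] at h7
    rw [Complex.im_ofReal_mul, Complex.im_ofReal_mul]
    rw [show ((α * n + (g+1)) * Real.pi * Complex.I : ℂ) = ((Real.pi * (α * n + (g+1)) : ℝ) : ℂ) * Complex.I by push_cast; ring]
    rw [Complex.exp_ofReal_mul_I_im, div_mul_eq_div_div, div_eq_mul_inv _ (Real.Gamma _), h7]
    have := Real.pi_pos.ne'
    field_simp
  · intro n
    exact ((gamma_integral α g n hα (by linarith)).1.ofReal).mul_const _
  · refine (summable_gamma α |x| g hα hα1 (abs_nonneg x) (by linarith)).congr fun n => ?_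
    rw [← (gamma_integral α g n hα (by linarith)).2, ← integral_const_mul]
    refine setIntegral_congr_fun measurableSet_Ioi fun r hr => ?_
    have hr : 0 < r := hr
    simp only [norm_mul]
    rw [show ((α * n + (g+1)) * Real.pi * Complex.I : ℂ) = ((Real.pi * (α * n + (g+1)) : ℝ) : ℂ) * Complex.I by push_cast; ring]
    rw [Complex.norm_exp_ofReal_mul_I, Complex.norm_real, Complex.norm_real, Real.norm_of_nonneg (by positivity)]
    simp
    ring
end WrightAux

namespace WrightAux
open MeasureTheory Set Filter Topology

lemma sin_mul_pos (c ψ : ℝ) (hc : 0 < c) (hc1 : c < 1) (h0 : 0 < ψ) (h1 : ψ < Real.pi) :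
    0 < Real.sin (c * ψ) := by
  apply Real.sin_pos_of_pos_of_lt_pi (by positivity); nlinarith

lemma trig_key (c ψ : ℝ) (hc : 0 < c) (hc1 : c < 1) (h0 : 0 < ψ) (h1 : ψ < Real.pi) :
    Real.sin (c * ψ) * Real.cos ψ < c * Real.cos (c * ψ) * Real.sin ψ := by
  have hd : ∀ t : ℝ, HasDerivAt (fun t => c * Real.cos (c * t) * Real.sin t - Real.sin (c * t) * Real.cos t)
      ((1 - c^2) * (Real.sin (c * t) * Real.sin t)) t := by
    intro t
    have hl : HasDerivAt (fun t : ℝ => c * t) c t := by simpa using (hasDerivAt_id t).const_mul c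
    have := ((hl.cos.const_mul c).mul (Real.hasDerivAt_sin t)).sub (hl.sin.mul (Real.hasDerivAt_cos t))
    refine this.congr_deriv ?_
    ring
  have hm : StrictMonoOn (fun t => c * Real.cos (c * t) * Real.sin t - Real.sin (c * t) * Real.cos t) (Icc 0 ψ) := by
    apply strictMonoOn_of_deriv_pos (convex_Icc _ _)
    · exact fun t _ => (hd t).continuousAt.continuousWithinAt
    · intro t ht
      rw [interior_Icc] at ht
      rw [(hd t).deriv]
      have h2 := sin_mul_pos c t hc hc1 ht.1 (by linarith [ht.2])
      have h3 := Real.sin_pos_of_pos_of_lt_pi ht.1 (by linarith [ht.2])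
      have : 0 < 1 - c^2 := by nlinarith
      positivity
  have := hm (left_mem_Icc.2 h0.le) (right_mem_Icc.2 h0.le) h0
  simp at this
  linarith

lemma ratio_strictMono (c : ℝ) (hc : 0 < c) (hc1 : c < 1) :
    StrictMonoOn (fun t => Real.sin (c * t) / Real.sin t) (Ioo 0 Real.pi) := by
  have hd : ∀ t ∈ Ioo 0 Real.pi, HasDerivAt (fun t => Real.sin (c * t) / Real.sin t)
      ((c * Real.cos (c * t) * Real.sin t - Real.sin (c * t) * Real.cos t) / (Real.sin t)^2) t := by
    intro t ht
    have h3 := Real.sin_pos_of_pos_of_lt_pi ht.1 ht.2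
    have hl : HasDerivAt (fun t : ℝ => c * t) c t := by simpa using (hasDerivAt_id t).const_mul c
    refine (hl.sin.div (Real.hasDerivAt_sin t) h3.ne').congr_deriv ?_
    ring
  apply strictMonoOn_of_deriv_pos (convex_Ioo _ _)
  · exact fun t ht => (hd t ht).continuousAt.continuousWithinAt
  · intro t ht
    rw [interior_Ioo] at ht
    rw [(hd t ht).deriv]
    have h3 := Real.sin_pos_of_pos_of_lt_pi ht.1 ht.2
    have := trig_key c t hc hc1 ht.1 ht.2
    apply div_pos <;> [linarith; positivity]

noncomputable def wR (α ψ : ℝ) : ℝ := (α * Real.sinc (α * ψ) / Real.sinc ψ) ^ (1 / (1 - α))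

noncomputable def wL (α ψ : ℝ) : ℝ :=
  (α * (Real.cos (α * ψ) / Real.sin (α * ψ)) - Real.cos ψ / Real.sin ψ) / (1 - α)

noncomputable def wK (α ψ : ℝ) : ℝ := wR α ψ * Real.sin ((1 - α) * ψ) / Real.sin (α * ψ)

lemma wR_eq (α ψ : ℝ) (hα : 0 < α) (h0 : 0 < ψ) :
    wR α ψ = (Real.sin (α * ψ) / Real.sin ψ) ^ (1 / (1 - α)) := by
  rw [wR, Real.sinc_of_ne_zero h0.ne', Real.sinc_of_ne_zero (mul_pos hα h0).ne']
  congr 1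
  field_simp

lemma wR_pos (α ψ : ℝ) (hα : 0 < α) (hα1 : α < 1) (h0 : 0 < ψ) (h1 : ψ < Real.pi) : 0 < wR α ψ := by
  rw [wR_eq α ψ hα h0]
  have h2 := sin_mul_pos α ψ hα hα1 h0 h1
  have h3 := Real.sin_pos_of_pos_of_lt_pi h0 h1
  positivity

lemma wR_zero_pos (α : ℝ) (hα : 0 < α) : 0 < wR α 0 := by
  simp only [wR, mul_zero, Real.sinc_zero]; positivity

lemma wR_cont (α : ℝ) (hα : 0 < α) : ContinuousAt (wR α) 0 := by
  unfold wR
  apply ContinuousAt.rpow_const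
  · apply ContinuousAt.div
    · have := Real.continuous_sinc
      fun_prop
    · exact Real.continuous_sinc.continuousAt
    · simp
  · left; simp [hα.ne']

lemma wR_rpow (α ψ : ℝ) (hα : 0 < α) (hα1 : α < 1) (h0 : 0 < ψ) (h1 : ψ < Real.pi) :
    wR α ψ ^ (1 - α) = Real.sin (α * ψ) / Real.sin ψ := by
  have h2 := sin_mul_pos α ψ hα hα1 h0 h1
  have h3 := Real.sin_pos_of_pos_of_lt_pi h0 h1
  rw [wR_eq α ψ hα h0, ← Real.rpow_mul (by positivity), one_div_mul_cancel (by linarith), Real.rpow_one]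

lemma wR_hasDeriv (α ψ : ℝ) (hα : 0 < α) (hα1 : α < 1) (h0 : 0 < ψ) (h1 : ψ < Real.pi) :
    HasDerivAt (wR α) (wR α ψ * wL α ψ) ψ := by
  have h2 := sin_mul_pos α ψ hα hα1 h0 h1
  have h3 := Real.sin_pos_of_pos_of_lt_pi h0 h1
  have hl : HasDerivAt (fun t : ℝ => α * t) α ψ := by simpa using (hasDerivAt_id ψ).const_mul α
  have hd : HasDerivAt (fun t => Real.sin (α * t) / Real.sin t) _ ψ := hl.sin.div (Real.hasDerivAt_sin ψ) h3.ne'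
  have hp := hd.rpow_const (p := 1 / (1 - α)) (Or.inl (by positivity))
  have he : wR α =ᶠ[𝓝 ψ] fun t => (Real.sin (α * t) / Real.sin t) ^ (1 / (1 - α)) := by
    filter_upwards [lt_mem_nhds h0] with t ht using wR_eq α t hα ht
  refine (hp.congr_of_eventuallyEq he).congr_deriv ?_
  rw [wR_eq α ψ hα h0, wL, Real.rpow_sub_one (by positivity)]
  have : 1 - α ≠ 0 := by linarith
  field_simp

lemma wL_pos (α ψ : ℝ) (hα : 0 < α) (hα1 : α < 1) (h0 : 0 < ψ) (h1 : ψ < Real.pi) : 0 < wL α ψ := by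
  have h2 := sin_mul_pos α ψ hα hα1 h0 h1
  have h3 := Real.sin_pos_of_pos_of_lt_pi h0 h1
  have := trig_key α ψ hα hα1 h0 h1
  rw [wL]
  apply div_pos _ (by linarith)
  rw [sub_pos, ← mul_div_assoc, div_lt_div_iff₀ h3 h2]
  linarith

lemma wL_hasDeriv (α ψ : ℝ) (hα : 0 < α) (hα1 : α < 1) (h0 : 0 < ψ) (h1 : ψ < Real.pi) :
    HasDerivAt (wL α) ((1 - α^2 + (Real.cos ψ / Real.sin ψ)^2 - (α * (Real.cos (α * ψ) / Real.sin (α * ψ)))^2) / (1 - α)) ψ := by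
  have h2 := sin_mul_pos α ψ hα hα1 h0 h1
  have h3 := Real.sin_pos_of_pos_of_lt_pi h0 h1
  have hl : HasDerivAt (fun t : ℝ => α * t) α ψ := by simpa using (hasDerivAt_id ψ).const_mul α
  have hd := (((hl.cos.div hl.sin h2.ne').const_mul α).sub ((Real.hasDerivAt_cos ψ).div (Real.hasDerivAt_sin ψ) h3.ne')).div_const (1-α)
  refine hd.congr_deriv ?_
  congr 1
  field_simp
  ring

lemma wL_deriv_le (α ψ : ℝ) (hα : 0 < α) (hα1 : α < 1) (h0 : 0 < ψ) (h1 : ψ < Real.pi) :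
    (1 - α^2 + (Real.cos ψ / Real.sin ψ)^2 - (α * (Real.cos (α * ψ) / Real.sin (α * ψ)))^2) / (1 - α)
      ≤ (1 + α) * (1 + wL α ψ ^ 2) := by
  have h2 := sin_mul_pos α ψ hα hα1 h0 h1
  have h3 := Real.sin_pos_of_pos_of_lt_pi h0 h1
  have h4 := wL_pos α ψ hα hα1 h0 h1
  have h5 : 0 ≤ Real.cos (α * ψ) / Real.sin (α * ψ) - Real.cos ψ / Real.sin ψ := by
    rw [sub_nonneg, div_le_div_iff₀ h3 h2]
    have := sin_mul_pos (1-α) ψ (by linarith) (by linarith) h0 h1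
    rw [show (1-α)*ψ = ψ - α * ψ by ring, Real.sin_sub] at this
    linarith
  have hα2 : 0 < 1 - α := by linarith
  unfold wL at h4 ⊢
  have h6 : 0 < α * (Real.cos (α * ψ) / Real.sin (α * ψ)) - Real.cos ψ / Real.sin ψ := by
    by_contra h
    exact absurd h4 (not_lt.2 (div_nonpos_of_nonpos_of_nonneg (not_lt.1 h) hα2.le))
  generalize Real.cos (α * ψ) / Real.sin (α * ψ) = A at *
  generalize Real.cos ψ / Real.sin ψ = B at *
  rw [div_le_iff₀ hα2, div_pow]
  have h7 : (1 + α) * (1 + (α * A - B) ^ 2 / (1 - α) ^ 2) * (1 - α) - (1 - α ^ 2 + B ^ 2 - (α * A) ^ 2)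
     = 2 * α * (α * A - B) * (A - B) / (1 - α) := by
    field_simp; ring
  have h8 : 0 ≤ 2 * α * (α * A - B) * (A - B) / (1 - α) := by positivity
  linarith

lemma wK_strictMono (α : ℝ) (hα : 0 < α) (hα1 : α < 1) : StrictMonoOn (wK α) (Ioo 0 Real.pi) := by
  have he : ∀ t ∈ Ioo 0 Real.pi, wK α t = (Real.sin (α * t) / Real.sin t) ^ (α / (1 - α)) * (Real.sin ((1 - α) * t) / Real.sin t) := by
    intro t ht
    have h2 := sin_mul_pos α t hα hα1 ht.1 ht.2
    have h3 := Real.sin_pos_of_pos_of_lt_pi ht.1 ht.2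
    rw [wK, wR_eq α t hα ht.1]
    have : 1 - α ≠ 0 := by linarith
    rw [show 1 / (1 - α) = α / (1-α) + 1 by field_simp; ring, Real.rpow_add (by positivity), Real.rpow_one]
    field_simp
  intro s hs t ht hst
  rw [he s hs, he t ht]
  have h2 := sin_mul_pos α s hα hα1 hs.1 hs.2
  have h3 := Real.sin_pos_of_pos_of_lt_pi hs.1 hs.2
  have h4 := sin_mul_pos (1-α) s (by linarith) (by linarith) hs.1 hs.2
  have h5 := ratio_strictMono α hα hα1 hs ht hst
  have h6 := ratio_strictMono (1-α) (by linarith) (by linarith) hs ht hst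
  simp only at h5 h6
  have h8 : 0 < α / (1 - α) := div_pos hα (by linarith)
  have h7 := Real.rpow_lt_rpow (by positivity) h5 h8
  have h9 : 0 < (Real.sin (α * s) / Real.sin s) ^ (α / (1 - α)) := by positivity
  have h10 : 0 < Real.sin ((1 - α) * s) / Real.sin s := by positivity
  exact mul_lt_mul'' h7 h6 h9.le h10.le

lemma wL_tendsto (α : ℝ) (hα : 0 < α) (hα1 : α < 1) : Tendsto (wL α) (𝓝[<] Real.pi) atTop := by
  have hs : Tendsto Real.sin (𝓝[<] Real.pi) (𝓝[>] 0) := by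
    apply tendsto_nhdsWithin_of_tendsto_nhds_of_eventually_within
    · have := Real.continuous_sin.tendsto Real.pi
      rw [Real.sin_pi] at this
      exact this.mono_left nhdsWithin_le_nhds
    · filter_upwards [Ioo_mem_nhdsLT Real.pi_pos] with t ht using Real.sin_pos_of_pos_of_lt_pi ht.1 ht.2
  have h1 : Tendsto (fun t => (Real.sin t)⁻¹ * (-Real.cos t)) (𝓝[<] Real.pi) atTop := by
    apply (tendsto_inv_nhdsGT_zero.comp hs).atTop_mul_pos (C := 1) one_pos
    have := Real.continuous_cos.neg.tendsto Real.pi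
    rw [Pi.neg_apply, Real.cos_pi, neg_neg] at this
    exact this.mono_left nhdsWithin_le_nhds
  have h2 : Tendsto (fun t => α * (Real.cos (α * t) / Real.sin (α * t))) (𝓝[<] Real.pi) (𝓝 (α * (Real.cos (α * Real.pi) / Real.sin (α * Real.pi)))) := by
    have h3 : 0 < Real.sin (α * Real.pi) := Real.sin_pos_of_pos_of_lt_pi (by positivity) (by nlinarith [Real.pi_pos])
    have : ContinuousAt (fun t => α * (Real.cos (α * t) / Real.sin (α * t))) Real.pi := by
      apply ContinuousAt.mul continuousAt_const
      exact ContinuousAt.div (f := fun t => Real.cos (α * t)) (g := fun t => Real.sin (α * t)) (by fun_prop) (by fun_prop) h3.ne'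
    exact this.tendsto.mono_left nhdsWithin_le_nhds
  have h3 := (h2.add_atTop h1).atTop_div_const (r := 1 - α) (by linarith)
  refine h3.congr fun t => ?_
  rw [wL]; congr 1; ring

noncomputable def wT (α κ ψ : ℝ) : ℝ := κ * ψ - Real.arctan (wL α ψ)

lemma wT_hasDeriv (α κ ψ : ℝ) (hα : 0 < α) (hα1 : α < 1) (hκ : 1 + α ≤ κ) (h0 : 0 < ψ) (h1 : ψ < Real.pi) :
    ∃ d, 0 ≤ d ∧ HasDerivAt (wT α κ) d ψ := by
  have hl : HasDerivAt (fun t : ℝ => κ * t) κ ψ := by simpa using (hasDerivAt_id ψ).const_mul κ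
  have := hl.sub (wL_hasDeriv α ψ hα hα1 h0 h1).arctan
  refine ⟨_, ?_, this⟩
  have h2 := wL_deriv_le α ψ hα hα1 h0 h1
  have h3 : 0 < 1 + wL α ψ ^ 2 := by positivity
  rw [sub_nonneg, one_div, inv_mul_le_iff₀ h3]
  nlinarith

lemma wT_contOn (α κ : ℝ) (hα : 0 < α) (hα1 : α < 1) (hκ : 1 + α ≤ κ) : ContinuousOn (wT α κ) (Ioo 0 Real.pi) := by
  intro t ht
  obtain ⟨d, -, h⟩ := wT_hasDeriv α κ t hα hα1 hκ ht.1 ht.2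
  exact h.continuousAt.continuousWithinAt

lemma wT_mono (α κ : ℝ) (hα : 0 < α) (hα1 : α < 1) (hκ : 1 + α ≤ κ) : MonotoneOn (wT α κ) (Ioo 0 Real.pi) := by
  apply monotoneOn_of_deriv_nonneg (convex_Ioo _ _) (wT_contOn α κ hα hα1 hκ)
  · intro t ht
    rw [interior_Ioo] at ht
    obtain ⟨d, -, h⟩ := wT_hasDeriv α κ t hα hα1 hκ ht.1 ht.2
    exact h.differentiableAt.differentiableWithinAt
  · intro t ht
    rw [interior_Ioo] at ht
    obtain ⟨d, hd, h⟩ := wT_hasDeriv α κ t hα hα1 hκ ht.1 ht.2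
    rwa [h.deriv]

lemma wT_tendsto (α κ : ℝ) (hα : 0 < α) (hα1 : α < 1) :
    Tendsto (wT α κ) (𝓝[<] Real.pi) (𝓝 (κ * Real.pi - Real.pi / 2)) := by
  apply Tendsto.sub
  · exact ((continuous_const.mul continuous_id).tendsto Real.pi).mono_left nhdsWithin_le_nhds
  · exact (Real.tendsto_arctan_atTop.mono_right nhdsWithin_le_nhds).comp (wL_tendsto α hα hα1)

/-- the sign-determining factor -/
noncomputable def wE (α κ ψ : ℝ) : ℝ := wL α ψ * Real.sin (κ * ψ) + Real.cos (κ * ψ)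

lemma wE_eq (α κ ψ : ℝ) : wE α κ ψ = √(1 + wL α ψ ^ 2) * Real.cos (wT α κ ψ) := by
  rw [wE, wT, Real.cos_sub, Real.cos_arctan, Real.sin_arctan]
  have : √(1 + wL α ψ ^ 2) ≠ 0 := by positivity
  field_simp
  ring

/-- sign pattern of `wE`. -/
lemma wE_pattern (α κ : ℝ) (hα : 0 < α) (hα1 : α < 1) (hκ : 1 + α ≤ κ) (hκ3 : κ < 3) :
    ∃ a ∈ Ioo 0 Real.pi, (∀ t ∈ Ioo 0 Real.pi, t ≤ a → 0 ≤ wE α κ t) ∧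
      ((∀ t ∈ Ioo 0 Real.pi, a ≤ t → wE α κ t ≤ 0) ∨
       ∃ b ∈ Ioo 0 Real.pi, a < b ∧ (∀ t ∈ Ioo 0 Real.pi, a ≤ t → t ≤ b → wE α κ t ≤ 0) ∧
          (∀ t ∈ Ioo 0 Real.pi, b ≤ t → 0 ≤ wE α κ t)) := by
  have hpi := Real.pi_pos
  have hm := wT_mono α κ hα hα1 hκ
  have hc := wT_contOn α κ hα hα1 hκ
  have hl := wT_tendsto α κ hα hα1
  have hpos : ∀ t, 0 < √(1 + wL α t ^ 2) := fun t => by positivity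
  have hlow : ∀ t ∈ Ioo 0 Real.pi, -(Real.pi/2) ≤ wT α κ t := by
    intro t ht
    have := Real.arctan_lt_pi_div_two (wL α t)
    have h2 : 0 < κ * t := mul_pos (by linarith) ht.1
    rw [wT]; linarith
  have hup : ∀ t ∈ Ioo 0 Real.pi, wT α κ t ≤ 5 * Real.pi / 2 := by
    intro t ht
    have : wT α κ t ≤ κ * Real.pi - Real.pi / 2 := by
      refine ge_of_tendsto hl ?_
      filter_upwards [Ioo_mem_nhdsLT ht.2] with s hs
      exact hm ht ⟨ht.1.trans hs.1, hs.2⟩ hs.1.le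
    nlinarith
  have hE1 : ∀ t, -(Real.pi/2) ≤ wT α κ t → wT α κ t ≤ Real.pi/2 → 0 ≤ wE α κ t := by
    intro t h1 h2
    rw [wE_eq]
    exact mul_nonneg (hpos t).le (Real.cos_nonneg_of_neg_pi_div_two_le_of_le h1 h2)
  have hE2 : ∀ t, (Real.pi/2) ≤ wT α κ t → wT α κ t ≤ 3 * Real.pi/2 → wE α κ t ≤ 0 := by
    intro t h1 h2
    rw [wE_eq]
    exact mul_nonpos_of_nonneg_of_nonpos (hpos t).le (Real.cos_nonpos_of_pi_div_two_le_of_le h1 (by linarith))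
  have hE3 : ∀ t, (3 * Real.pi/2) ≤ wT α κ t → wT α κ t ≤ 5 * Real.pi/2 → 0 ≤ wE α κ t := by
    intro t h1 h2
    rw [wE_eq, ← Real.cos_sub_two_pi]
    exact mul_nonneg (hpos t).le (Real.cos_nonneg_of_neg_pi_div_two_le_of_le (by linarith) (by linarith))
  have ivt : ∀ s ∈ Ioo 0 Real.pi, ∀ t ∈ Ioo 0 Real.pi, s ≤ t → ∀ y, wT α κ s ≤ y → y ≤ wT α κ t →
      ∃ u ∈ Ioo 0 Real.pi, s ≤ u ∧ wT α κ u = y := by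
    intro s hs t ht hst y h1 h2
    have := intermediate_value_Icc hst (hc.mono (fun u hu => ⟨hs.1.trans_le hu.1, hu.2.trans_lt ht.2⟩))
    obtain ⟨u, hu, h⟩ := this ⟨h1, h2⟩
    exact ⟨u, ⟨hs.1.trans_le hu.1, hu.2.trans_lt ht.2⟩, hu.1, h⟩
  -- first crossing
  obtain ⟨a, ha, hTa⟩ : ∃ a ∈ Ioo 0 Real.pi, wT α κ a = Real.pi / 2 := by
    have hs : Real.pi / (2 * κ) ∈ Ioo 0 Real.pi := by
      constructor
      · apply div_pos hpi; linarith
      · rw [div_lt_iff₀ (by linarith)]; nlinarith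
    have h1 : ∀ᶠ t in 𝓝[<] Real.pi, Real.pi / 2 < wT α κ t := hl.eventually (lt_mem_nhds (by nlinarith))
    obtain ⟨t, ht, ht2⟩ := (h1.and (Ioo_mem_nhdsLT hs.2)).exists
    obtain ⟨u, hu, -, h⟩ := ivt _ hs t ⟨hs.1.trans ht2.1, ht2.2⟩ ht2.1.le (Real.pi/2) (by
      rw [wT]
      have := Real.arctan_pos.2 (wL_pos α _ hα hα1 hs.1 hs.2)
      have h3 : κ * (Real.pi / (2 * κ)) = Real.pi / 2 := by
        have : κ ≠ 0 := by linarith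
        field_simp
      linarith) ht.le
    exact ⟨u, hu, h⟩
  refine ⟨a, ha, fun t ht hta => hE1 t (hlow t ht) (by rw [← hTa]; exact hm ht ha hta), ?_⟩
  by_cases hb : ∃ b ∈ Ioo 0 Real.pi, wT α κ b = 3 * Real.pi / 2
  · right
    obtain ⟨b, hb, hTb⟩ := hb
    refine ⟨b, hb, ?_, fun t ht h1 h2 => hE2 t ?_ ?_, fun t ht h1 => hE3 t ?_ (hup t ht)⟩
    · by_contra h
      have := hm hb ha (not_lt.1 h)
      linarith
    · rw [← hTa]; exact hm ha ht h1
    · rw [← hTb]; exact hm ht hb h2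
    · rw [← hTb]; exact hm hb ht h1
  · left
    intro t ht hat
    refine hE2 t (by rw [← hTa]; exact hm ha ht hat) ?_
    by_contra h
    obtain ⟨u, hu, -, hu2⟩ := ivt a ha t ht hat (3 * Real.pi/2) (by linarith) (by linarith)
    exact hb ⟨u, hu, hu2⟩

/-- chord lemma -/
lemma chord (m u w : ℝ) (hm : 1 < m) (hu : 0 ≤ u) (huw : u < w) :
    ∃ c₁ c₂ : ℝ, 0 ≤ c₁ ∧ c₂ ≤ 0 ∧ (∀ v, 0 ≤ v → v ≤ u → 0 ≤ c₁ + c₂ * v + v ^ m) ∧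
      (∀ v, u ≤ v → v ≤ w → c₁ + c₂ * v + v ^ m ≤ 0) ∧ (∀ v, w ≤ v → 0 ≤ c₁ + c₂ * v + v ^ m) := by
  have hc := convexOn_rpow hm.le
  set s := (w ^ m - u ^ m) / (w - u) with hs
  have hwu : 0 < w - u := by linarith
  have hs0 : 0 ≤ s := div_nonneg (sub_nonneg.2 (Real.rpow_le_rpow hu huw.le (by linarith))) hwu.le
  have hsw : s * (w - u) = w ^ m - u ^ m := div_mul_cancel₀ _ hwu.ne'
  -- left
  have hleft : ∀ v, 0 ≤ v → v ≤ u → 0 ≤ (s * u - u ^ m) + -s * v + v ^ m := by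
    intro v hv hvu
    rcases hvu.eq_or_lt with rfl | hvu
    · linarith
    have := hc.slope_mono_adjacent (x := v) (y := u) (z := w) hv (hu.trans huw.le) hvu huw
    rw [← hs, div_le_iff₀ (by linarith)] at this
    linarith
  refine ⟨s * u - u ^ m, -s, ?_, by linarith, hleft, ?_, ?_⟩
  · have := hleft 0 le_rfl hu
    rw [Real.zero_rpow (by linarith)] at this
    linarith
  · intro v h1 h2
    rcases h1.eq_or_lt with rfl | h1
    · linarith
    rcases h2.eq_or_lt with rfl | h2
    · linarith
    have := hc.secant_mono_aux1 (x := u) (y := v) (z := w) hu (hu.trans huw.le) h1 h2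
    by_contra h
    have h3 : 0 < ((s * u - u ^ m) + -s * v + v ^ m) * (w - u) := mul_pos (not_le.1 h) hwu
    have h4 : ((s * u - u ^ m) + -s * v + v ^ m) * (w - u) = (s * (w - u)) * (u - v) + (v ^ m - u ^ m) * (w-u) := by ring
    rw [h4, hsw] at h3
    linarith
  · intro v hv
    rcases hv.eq_or_lt with rfl | hv
    · linarith
    have := hc.slope_mono_adjacent (x := u) (y := w) (z := v) hu ((hu.trans huw.le).trans hv.le) huw hv
    rw [← hs, le_div_iff₀ (by linarith)] at this
    linarith

end WrightAux

namespace WrightAux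
open MeasureTheory Set Filter Topology
open Complex in
noncomputable def wPhi (α g x : ℝ) (ζ : ℂ) (t : ℝ) : ℂ :=
  exp (t * exp ζ - x * (t ^ α : ℝ) * exp (α * ζ) + (g + 1) * ζ) * (t ^ g : ℝ)

noncomputable def wP (α g x : ℝ) (ζ : ℂ) : ℂ := ∫ t in (0:ℝ)..1, wPhi α g x ζ t

open Complex in
lemma wP_hasDeriv (α g x : ℝ) (ζ : ℂ) (hα : 0 < α) (hg : 0 < g) :
    HasDerivAt (wP α g x) (exp (exp ζ - x * exp (α * ζ) + (g + 1) * ζ)) ζ := by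
  have c1 : Continuous (fun t : ℝ => t ^ α) := Real.continuous_rpow_const hα.le
  have c2 : Continuous (fun t : ℝ => t ^ g) := Real.continuous_rpow_const hg.le
  let F' : ℂ → ℝ → ℂ := fun ζ t => (t * exp ζ - x * (t ^ α : ℝ) * (exp (α * ζ) * α) + (g + 1)) * wPhi α g x ζ t
  have cF' : Continuous (fun p : ℂ × ℝ => F' p.1 p.2) := by
    simp only [F', wPhi]; fun_prop
  have cF : ∀ ζ, Continuous (wPhi α g x ζ) := by
    intro ζ; unfold wPhi; fun_prop
  have cF1 : Continuous (F' ζ) := by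
    simp only [F', wPhi]; fun_prop
  obtain ⟨C, hC⟩ := ((isCompact_closedBall ζ 1).prod (isCompact_Icc (a := (0:ℝ)) (b := 1))).exists_bound_of_continuousOn cF'.continuousOn
  have h := (intervalIntegral.hasDerivAt_integral_of_dominated_loc_of_deriv_le (μ := volume) (a := 0) (b := 1)
    (F := wPhi α g x) (F' := F') (x₀ := ζ) (bound := fun _ => C) (Metric.closedBall_mem_nhds ζ one_pos)
    (Eventually.of_forall fun z => (cF z).aestronglyMeasurable) ((cF ζ).intervalIntegrable _ _)
    cF1.aestronglyMeasurable
    (Eventually.of_forall fun t ht z hz => hC (z, t) ⟨hz, by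
      rw [uIoc_of_le zero_le_one] at ht; exact ⟨ht.1.le, ht.2⟩⟩)
    (intervalIntegrable_const) (Eventually.of_forall fun t ht z hz => ?_)).2
  · refine h.congr_deriv ?_
    have hT : ∀ t ∈ Ioo (0:ℝ) 1, HasDerivAt (fun t : ℝ => (t : ℂ) * wPhi α g x ζ t) (F' ζ t) t := by
      intro t ht
      have hc : HasDerivAt (fun t : ℝ => (t:ℂ)) 1 t := by simpa using (hasDerivAt_id t).ofReal_comp
      have ha : HasDerivAt (fun t : ℝ => ((t ^ α : ℝ):ℂ)) ((α * t ^ (α - 1) : ℝ) : ℂ) t := (Real.hasDerivAt_rpow_const (Or.inl ht.1.ne')).ofReal_comp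
      have hgg : HasDerivAt (fun t : ℝ => ((t ^ g : ℝ):ℂ)) ((g * t ^ (g - 1) : ℝ) : ℂ) t := (Real.hasDerivAt_rpow_const (Or.inl ht.1.ne')).ofReal_comp
      have := hc.mul ((((hc.mul_const (exp ζ)).sub ((ha.const_mul (x:ℂ)).mul_const (exp (α * ζ)))).add_const ((g+1) * ζ)).cexp.mul hgg)
      refine this.congr_deriv ?_
      simp only [F', wPhi, Pi.mul_apply, Pi.sub_apply, Pi.add_apply]
      rw [Real.rpow_sub_one ht.1.ne', Real.rpow_sub_one ht.1.ne']
      have : (t:ℂ) ≠ 0 := by exact_mod_cast ht.1.ne'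
      push_cast
      field_simp
      ring
    rw [intervalIntegral.integral_eq_sub_of_hasDerivAt_of_le zero_le_one _ hT (cF1.intervalIntegrable _ _)]
    · simp [wPhi]
    · have := cF ζ
      fun_prop
  · simp only [F', wPhi]
    have h1 : HasDerivAt (fun z : ℂ => (α:ℂ) * z) α z := by simpa using (hasDerivAt_id z).const_mul (α:ℂ)
    have h2 : HasDerivAt (fun z : ℂ => ((g:ℂ)+1) * z) (g+1) z := by simpa using (hasDerivAt_id z).const_mul ((g:ℂ)+1)
    have := (((((Complex.hasDerivAt_exp z).const_mul (t:ℂ)).sub (h1.cexp.const_mul ((x:ℂ) * (t^α:ℝ)))).add h2).cexp).mul_const ((t^g:ℝ):ℂ)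
    refine this.congr_deriv ?_
    simp
    ring

open Complex in
lemma wP_real (α g x l : ℝ) : (wP α g x (l:ℂ)).im = 0 := by
  have : ∀ t : ℝ, wPhi α g x l t = ((Real.exp (t * Real.exp l - x * t ^ α * Real.exp (α * l) + (g+1) * l) * t ^ g : ℝ) : ℂ) := by
    intro t; simp [wPhi]
  rw [wP]
  simp_rw [this]
  rw [intervalIntegral.integral_ofReal, ofReal_im]

open Complex in
lemma wP_polar (α g x r ψ : ℝ) (hr : 0 < r) : wP α g x ((Real.log r : ℝ) + ψ * I) =
    ∫ s in Ioi (0:ℝ), (Ioc 0 r).indicator (fun s : ℝ => exp (s * exp (ψ * I) - x * (s ^ α : ℝ) * exp (α * ψ * I)) * (s ^ g : ℝ) * exp ((g+1) * ψ * I)) s := by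
  rw [setIntegral_indicator measurableSet_Ioc, inter_eq_right.2 Ioc_subset_Ioi_self, ← intervalIntegral.integral_of_le hr.le]
  have := intervalIntegral.smul_integral_comp_mul_left (a := 0) (b := 1) (fun s : ℝ => exp (s * exp (ψ * I) - x * (s ^ α : ℝ) * exp (α * ψ * I)) * (s ^ g : ℝ) * exp ((g+1) * ψ * I)) r
  rw [mul_zero, mul_one] at this
  rw [← this, wP, ← intervalIntegral.integral_smul]
  refine intervalIntegral.integral_congr fun t ht => ?_
  rw [uIcc_of_le zero_le_one] at ht
  simp only [wPhi, real_smul]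
  have e1 : exp ((Real.log r : ℝ) + ψ * I) = r * exp (ψ * I) := by
    rw [exp_add, ← ofReal_exp, Real.exp_log hr]
  have e2 : exp (α * ((Real.log r : ℝ) + ψ * I)) = (r ^ α : ℝ) * exp (α * ψ * I) := by
    rw [mul_add, exp_add, Real.rpow_def_of_pos hr, ofReal_exp]; push_cast; ring_nf
  have e3 : exp ((g+1) * ((Real.log r : ℝ) + ψ * I)) = (r ^ (g+1) : ℝ) * exp ((g+1) * ψ * I) := by
    rw [mul_add, exp_add, Real.rpow_def_of_pos hr, ofReal_exp]; push_cast; ring_nf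
  rw [exp_add, e1, e2, e3, Real.mul_rpow hr.le ht.1, Real.mul_rpow hr.le ht.1, Real.rpow_add hr, Real.rpow_one]
  push_cast
  ring_nf

lemma wR_tendsto (α : ℝ) (hα : 0 < α) (hα1 : α < 1) : Tendsto (wR α) (𝓝[<] Real.pi) atTop := by
  have hs : Tendsto Real.sin (𝓝[<] Real.pi) (𝓝[>] 0) := by
    apply tendsto_nhdsWithin_of_tendsto_nhds_of_eventually_within
    · have := Real.continuous_sin.tendsto Real.pi
      rw [Real.sin_pi] at this
      exact this.mono_left nhdsWithin_le_nhds
    · filter_upwards [Ioo_mem_nhdsLT Real.pi_pos] with t ht using Real.sin_pos_of_pos_of_lt_pi ht.1 ht.2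
  have h3 : 0 < Real.sin (α * Real.pi) := Real.sin_pos_of_pos_of_lt_pi (by have := Real.pi_pos; positivity) (by nlinarith [Real.pi_pos])
  have h1 : Tendsto (fun t => (Real.sin t)⁻¹ * (Real.sin (α * t))) (𝓝[<] Real.pi) atTop := by
    apply (tendsto_inv_nhdsGT_zero.comp hs).atTop_mul_pos h3
    have : ContinuousAt (fun t => Real.sin (α * t)) Real.pi := by fun_prop
    exact this.tendsto.mono_left nhdsWithin_le_nhds
  have h2 := (tendsto_rpow_atTop (y := 1/(1-α)) (by apply one_div_pos.2; linarith)).comp h1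
  refine h2.congr' ?_
  filter_upwards [Ioo_mem_nhdsLT Real.pi_pos] with t ht
  rw [wR_eq α t hα ht.1, Function.comp, inv_mul_eq_div]

/-- The (normalised) angle primitive. -/
noncomputable def wQ (α g x ψ : ℝ) : ℝ :=
  (wP α g x ((Real.log (x ^ (1/(1-α)) * wR α ψ) : ℝ) + ψ * Complex.I)).im

open Complex in
lemma wQ_tendsto_pi (α g x : ℝ) (hα : 0 < α) (hα1 : α < 1) (hg : 0 < g) (hx : 0 < x) :
    Tendsto (wQ α g x) (𝓝[<] Real.pi) (𝓝 (Real.pi * wright (-α) (-g) (-x))) := by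
  rw [← ray_integral α g x hα hα1 hg]
  refine (Complex.continuous_im.tendsto _).comp ?_
  have hev : ∀ᶠ ψ in 𝓝[<] Real.pi, ψ ∈ Ioo (2 * Real.pi / 3) Real.pi := Ioo_mem_nhdsLT (by linarith [Real.pi_pos])
  have hpi := Real.pi_pos
  have hr : Tendsto (fun ψ => x ^ (1/(1-α)) * wR α ψ) (𝓝[<] Real.pi) atTop :=
    (wR_tendsto α hα hα1).const_mul_atTop (by positivity)
  have heq : (fun ψ : ℝ => ∫ s in Ioi (0:ℝ), (Ioc 0 (x ^ (1/(1-α)) * wR α ψ)).indicator (fun s : ℝ => exp (s * exp (ψ * I) - x * (s ^ α : ℝ) * exp (α * ψ * I)) * (s ^ g : ℝ) * exp ((g+1) * ψ * I)) s) =ᶠ[𝓝[<] Real.pi]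
     (fun ψ : ℝ => wP α g x ((Real.log (x ^ (1/(1-α)) * wR α ψ) : ℝ) + ψ * Complex.I)) := by
    filter_upwards [hr.eventually_gt_atTop 0] with ψ hψ
    rw [wP_polar _ _ _ _ _ hψ]
  refine Tendsto.congr' heq ?_
  refine tendsto_integral_filter_of_dominated_convergence (fun s => Real.exp (-(1/2) * s + x * s ^ α) * s ^ g) ?_ ?_ (integrable_dom α (1/2) x g hα hα1 (by norm_num) hx.le (by linarith)) ?_
  · refine Eventually.of_forall fun ψ => ?_
    refine (Measurable.indicator ?_ measurableSet_Ioc).aestronglyMeasurable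
    fun_prop
  · filter_upwards [hev] with ψ hψ
    filter_upwards [ae_restrict_mem measurableSet_Ioi] with s hs
    have hs : 0 < s := hs
    refine (norm_indicator_le_norm_self _ _).trans ?_
    rw [norm_mul, norm_mul, norm_exp, norm_exp, norm_real, Real.norm_of_nonneg (by positivity)]
    have e1 : ((g+1) * ψ * I : ℂ).re = 0 := by simp
    have e2 : (s * exp (ψ * I) - x * (s ^ α : ℝ) * exp (α * ψ * I)).re = s * Real.cos ψ - x * s ^ α * Real.cos (α * ψ) := by
      rw [sub_re, re_ofReal_mul, exp_ofReal_mul_I_re, ← ofReal_mul, ← ofReal_mul, re_ofReal_mul, exp_ofReal_mul_I_re]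
    rw [e1, e2, Real.exp_zero, mul_one]
    gcongr
    have hc : Real.cos ψ ≤ -(1/2) := by
      have := Real.cos_le_cos_of_nonneg_of_le_pi (x := 2 * Real.pi / 3) (y := ψ) (by positivity) hψ.2.le hψ.1.le
      rw [show 2 * Real.pi / 3 = Real.pi - Real.pi / 3 by ring, Real.cos_pi_sub, Real.cos_pi_div_three] at this
      exact this
    have h1 := Real.neg_one_le_cos (α * ψ)
    have h2 : 0 < x * s ^ α := by positivity
    nlinarith
  · filter_upwards [ae_restrict_mem measurableSet_Ioi] with s hs
    have hs : 0 < s := hs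
    have hct : Continuous (fun ψ : ℝ => exp (s * exp (ψ * I) - x * (s ^ α : ℝ) * exp (α * ψ * I)) * (s ^ g : ℝ) * exp ((g+1) * ψ * I)) := by fun_prop
    refine ((hct.tendsto Real.pi).mono_left nhdsWithin_le_nhds).congr' ?_
    filter_upwards [hr.eventually_ge_atTop s] with ψ hψ
    have hmem : s ∈ Ioc 0 (x ^ (1/(1-α)) * wR α ψ) := ⟨hs, hψ⟩
    rw [indicator_of_mem hmem]

open Complex in
lemma wQ_tendsto_zero (α g x : ℝ) (hα : 0 < α) (hg : 0 < g) (hx : 0 < x) :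
    Tendsto (wQ α g x) (𝓝[>] 0) (𝓝 0) := by
  have h0 : wQ α g x 0 = 0 := by
    rw [wQ, ofReal_zero, zero_mul, add_zero, wP_real]
  have hc : ContinuousAt (wQ α g x) 0 := by
    unfold wQ
    refine Complex.continuous_im.continuousAt.comp ?_
    refine ContinuousAt.comp (g := wP α g x) (wP_hasDeriv α g x _ hα hg).continuousAt ?_
    have h1 : ContinuousAt (fun ψ => Real.log (x ^ (1/(1-α)) * wR α ψ)) 0 := by
      apply ContinuousAt.log
      · exact continuousAt_const.mul (wR_cont α hα)
      · have := wR_zero_pos α hα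
        positivity
    exact (Complex.continuous_ofReal.continuousAt.comp h1).add (by fun_prop)
  have := hc.tendsto
  rw [h0] at this
  exact this.mono_left nhdsWithin_le_nhds

open Complex in
lemma wQ_hasDeriv (α g x ψ : ℝ) (hα : 0 < α) (hα1 : α < 1) (hg : 0 < g) (hx : 0 < x) (h0 : 0 < ψ) (h1 : ψ < Real.pi) :
    HasDerivAt (wQ α g x) ((x ^ (1/(1-α))) ^ (g+1) * (Real.exp (-(x ^ (1/(1-α))) * wK α ψ) * (wR α ψ ^ (g+1) * wE α (g+1) ψ))) ψ := by
  have hRp := wR_pos α ψ hα hα1 h0 h1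
  have h2 := sin_mul_pos α ψ hα hα1 h0 h1
  have h3 := Real.sin_pos_of_pos_of_lt_pi h0 h1
  have hx1 : (x ^ (1/(1-α))) ^ (1-α) = x := by
    rw [← Real.rpow_mul hx.le, one_div_mul_cancel (by linarith), Real.rpow_one]
  set l := x ^ (1/(1-α)) with hl
  have hlp : 0 < l := by positivity
  have hrp : 0 < l * wR α ψ := by positivity
  have hlog : HasDerivAt (fun ψ => Real.log (l * wR α ψ)) (wL α ψ) ψ := by
    refine (((wR_hasDeriv α ψ hα hα1 h0 h1).const_mul l).log hrp.ne').congr_deriv ?_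
    field_simp
  have hc : HasDerivAt (fun t : ℝ => (t:ℂ)) 1 ψ := by simpa using (hasDerivAt_id ψ).ofReal_comp
  have hz : HasDerivAt (fun ψ : ℝ => ((Real.log (l * wR α ψ) : ℝ) : ℂ) + ψ * I) (wL α ψ + I) ψ := by
    have h := hlog.ofReal_comp.add (hc.mul_const I)
    rw [one_mul] at h
    exact h
  have hP := HasDerivAt.comp ψ (wP_hasDeriv α g x _ hα hg) hz
  have hQ : HasDerivAt (wQ α g x) (exp (exp ((Real.log (l * wR α ψ) : ℝ) + ψ * I) - x * exp (α * ((Real.log (l * wR α ψ) : ℝ) + ψ * I)) + (g+1) * ((Real.log (l * wR α ψ) : ℝ) + ψ * I)) * (wL α ψ + I)).im ψ := by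
    have := (Complex.imCLM.hasFDerivAt.comp_hasDerivAt ψ hP)
    exact this
  refine hQ.congr_deriv ?_
  have hr1 : (l * wR α ψ) ^ (1 - α) = x * (Real.sin (α * ψ) / Real.sin ψ) := by
    rw [Real.mul_rpow hlp.le hRp.le, hx1, wR_rpow α ψ hα hα1 h0 h1]
  set r := l * wR α ψ with hr
  have hr2 : x * r ^ α = r * Real.sin ψ / Real.sin (α * ψ) := by
    have : r = r ^ (1 - α) * r ^ α := by rw [← Real.rpow_add hrp]; simp
    rw [eq_div_iff h2.ne']
    nth_rewrite 2 [this]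
    rw [hr1]; field_simp
  have e1 : exp ((Real.log r : ℝ) + ψ * I) = r * exp (ψ * I) := by
    rw [exp_add, ← ofReal_exp, Real.exp_log hrp]
  have e2 : exp (α * ((Real.log r : ℝ) + ψ * I)) = (r ^ α : ℝ) * exp ((α * ψ : ℝ) * I) := by
    rw [mul_add, exp_add, Real.rpow_def_of_pos hrp, ofReal_exp]; push_cast; ring_nf
  have e3 : exp ((g+1) * ((Real.log r : ℝ) + ψ * I)) = (r ^ (g+1) : ℝ) * exp (((g+1) * ψ : ℝ) * I) := by
    rw [mul_add, exp_add, Real.rpow_def_of_pos hrp, ofReal_exp]; push_cast; ring_nf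
  have e4 : (r * exp (ψ * I) - x * ((r ^ α : ℝ) * exp ((α * ψ : ℝ) * I)) : ℂ) = ((-l * wK α ψ : ℝ) : ℂ) := by
    rw [← mul_assoc, ← ofReal_mul, hr2]
    apply Complex.ext
    · rw [sub_re, re_ofReal_mul, re_ofReal_mul, exp_ofReal_mul_I_re, exp_ofReal_mul_I_re, ofReal_re, wK,
        show (1 - α) * ψ = ψ - α * ψ by ring, Real.sin_sub, hr]
      field_simp
      ring
    · rw [sub_im, im_ofReal_mul, im_ofReal_mul, exp_ofReal_mul_I_im, exp_ofReal_mul_I_im, ofReal_im]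
      field_simp
      ring
  change (exp (exp ((Real.log r : ℝ) + ψ * I) - x * exp (α * ((Real.log r : ℝ) + ψ * I)) + (g+1) * ((Real.log r : ℝ) + ψ * I)) * (wL α ψ + I)).im = _
  rw [exp_add, e1, e2, e3, e4, ← ofReal_exp, mul_assoc, mul_assoc, im_ofReal_mul, im_ofReal_mul, mul_im, exp_ofReal_mul_I_re, exp_ofReal_mul_I_im, hr, Real.mul_rpow hlp.le hRp.le, wE]
  simp
  ring

/-- Core: no sign pattern `-, +, -`. -/
lemma core (α g x₁ x₂ x₃ : ℝ) (hα : 0 < α) (hα1 : α < 1) (hg : α ≤ g) (hg2 : g < 2)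
    (h1 : 0 < x₁) (h12 : x₁ < x₂) (h23 : x₂ < x₃)
    (f1 : wright (-α) (-g) (-x₁) < 0) (f2 : 0 < wright (-α) (-g) (-x₂))
    (f3 : wright (-α) (-g) (-x₃) < 0) : False := by
  have hg0 : 0 < g := by linarith
  have h2 : 0 < x₂ := by linarith
  have h3 : 0 < x₃ := by linarith
  have he : 0 < 1/(1-α) := by apply one_div_pos.2; linarith
  have l12 : x₁ ^ (1/(1-α)) < x₂ ^ (1/(1-α)) := Real.rpow_lt_rpow h1.le h12 he
  have l23 : x₂ ^ (1/(1-α)) < x₃ ^ (1/(1-α)) := Real.rpow_lt_rpow h2.le h23 he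
  have p1 : 0 < x₁ ^ (1/(1-α)) := by positivity
  have p2 : 0 < x₂ ^ (1/(1-α)) := by positivity
  have p3 : 0 < x₃ ^ (1/(1-α)) := by positivity
  have D1 := fun t (ht : t ∈ Ioo 0 Real.pi) => wQ_hasDeriv α g x₁ t hα hα1 hg0 h1 ht.1 ht.2
  have D2 := fun t (ht : t ∈ Ioo 0 Real.pi) => wQ_hasDeriv α g x₂ t hα hα1 hg0 h2 ht.1 ht.2
  have D3 := fun t (ht : t ∈ Ioo 0 Real.pi) => wQ_hasDeriv α g x₃ t hα hα1 hg0 h3 ht.1 ht.2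
  have Z1 := wQ_tendsto_zero α g x₁ hα hg0 h1
  have Z2 := wQ_tendsto_zero α g x₂ hα hg0 h2
  have Z3 := wQ_tendsto_zero α g x₃ hα hg0 h3
  have T1 := wQ_tendsto_pi α g x₁ hα hα1 hg0 h1
  have T2 := wQ_tendsto_pi α g x₂ hα hα1 hg0 h2
  have T3 := wQ_tendsto_pi α g x₃ hα hα1 hg0 h3
  set l1 := x₁ ^ (1/(1-α))
  set l2 := x₂ ^ (1/(1-α))
  set l3 := x₃ ^ (1/(1-α))
  set m := (l3 - l1) / (l2 - l1) with hm
  have hm1 : 1 < m := by rw [hm, lt_div_iff₀ (by linarith)]; linarith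
  let v : ℝ → ℝ := fun t => Real.exp (-(l2 - l1) * wK α t)
  have hv0 : ∀ t, 0 < v t := fun t => Real.exp_pos _
  have hvm : ∀ s ∈ Ioo 0 Real.pi, ∀ t ∈ Ioo 0 Real.pi, s < t → v t < v s := by
    intro s hs t ht hst
    apply Real.exp_lt_exp.2
    have := wK_strictMono α hα hα1 hs ht hst
    nlinarith
  have hvm' : ∀ s ∈ Ioo 0 Real.pi, ∀ t ∈ Ioo 0 Real.pi, s ≤ t → v t ≤ v s := by
    intro s hs t ht hst
    rcases hst.eq_or_lt with rfl | hst
    · rfl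
    · exact (hvm s hs t ht hst).le
  -- the combination
  obtain ⟨c₁, c₂, hc₁, hc₂, hsign⟩ : ∃ c₁ c₂ : ℝ, 0 ≤ c₁ ∧ c₂ ≤ 0 ∧ ∀ t ∈ Ioo 0 Real.pi,
      0 ≤ (c₁ + c₂ * v t + v t ^ m) * wE α (g+1) t := by
    obtain ⟨a, ha, hEa, hE⟩ := wE_pattern α (g+1) hα hα1 (by linarith) (by linarith)
    rcases hE with hE | ⟨b, hb, hab, hEb, hEc⟩
    · obtain ⟨c₁, c₂, hc₁, hc₂, k1, k2, k3⟩ := chord m 0 (v a) hm1 le_rfl (hv0 a)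
      refine ⟨c₁, c₂, hc₁, hc₂, fun t ht => ?_⟩
      rcases le_total t a with hta | hta
      · exact mul_nonneg (k3 _ (hvm' t ht a ha hta)) (hEa t ht hta)
      · exact mul_nonneg_of_nonpos_of_nonpos (k2 _ (hv0 t).le (hvm' a ha t ht hta)) (hE t ht hta)
    · obtain ⟨c₁, c₂, hc₁, hc₂, k1, k2, k3⟩ := chord m (v b) (v a) hm1 (hv0 b).le (hvm a ha b hb hab)
      refine ⟨c₁, c₂, hc₁, hc₂, fun t ht => ?_⟩
      rcases le_total t a with hta | hta
      · exact mul_nonneg (k3 _ (hvm' t ht a ha hta)) (hEa t ht hta)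
      · rcases le_total t b with htb | htb
        · exact mul_nonneg_of_nonpos_of_nonpos (k2 _ (hvm' t ht b hb htb) (hvm' a ha t ht hta)) (hEb t ht hta htb)
        · exact mul_nonneg (k1 _ (hv0 t).le (hvm' b hb t ht htb)) (hEc t ht htb)
  let G : ℝ → ℝ := fun t => c₁ / l1 ^ (g+1) * wQ α g x₁ t + c₂ / l2 ^ (g+1) * wQ α g x₂ t + 1 / l3 ^ (g+1) * wQ α g x₃ t
  have q1 : 0 < l1 ^ (g+1) := by positivity
  have q2 : 0 < l2 ^ (g+1) := by positivity
  have q3 : 0 < l3 ^ (g+1) := by positivity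
  have hG : ∀ t ∈ Ioo 0 Real.pi, ∃ d, 0 ≤ d ∧ HasDerivAt G d t := by
    intro t ht
    refine ⟨_, ?_, (((D1 t ht).const_mul (c₁ / l1 ^ (g+1))).add ((D2 t ht).const_mul (c₂ / l2 ^ (g+1)))).add ((D3 t ht).const_mul (1 / l3 ^ (g+1)))⟩
    have e2 : Real.exp (-l2 * wK α t) = Real.exp (-l1 * wK α t) * v t := by
      simp only [v]; rw [← Real.exp_add]; ring_nf
    have e3 : Real.exp (-l3 * wK α t) = Real.exp (-l1 * wK α t) * v t ^ m := by
      simp only [v]; rw [← Real.exp_mul, ← Real.exp_add]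
      congr 1
      have : l2 - l1 ≠ 0 := by linarith
      rw [hm]; field_simp; ring
    rw [e2, e3]
    have hR := wR_pos α t hα hα1 ht.1 ht.2
    have h4 : 0 ≤ Real.exp (-l1 * wK α t) * wR α t ^ (g+1) * ((c₁ + c₂ * v t + v t ^ m) * wE α (g+1) t) :=
      mul_nonneg (by positivity) (hsign t ht)
    refine h4.trans_eq ?_
    field_simp
  have hmono : MonotoneOn G (Ioo 0 Real.pi) := by
    apply monotoneOn_of_deriv_nonneg (convex_Ioo _ _)
    · intro t ht
      obtain ⟨d, -, h⟩ := hG t ht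
      exact h.continuousAt.continuousWithinAt
    · intro t ht
      rw [interior_Ioo] at ht
      obtain ⟨d, -, h⟩ := hG t ht
      exact h.differentiableAt.differentiableWithinAt
    · intro t ht
      rw [interior_Ioo] at ht
      obtain ⟨d, hd, h⟩ := hG t ht
      rwa [h.deriv]
  have hZ : Tendsto G (𝓝[>] 0) (𝓝 0) := by
    have h := ((Z1.const_mul (c₁ / l1 ^ (g+1))).add (Z2.const_mul (c₂ / l2 ^ (g+1)))).add (Z3.const_mul (1 / l3 ^ (g+1)))
    simp only [mul_zero, add_zero] at h
    exact h
  have hT := ((T1.const_mul (c₁ / l1 ^ (g+1))).add (T2.const_mul (c₂ / l2 ^ (g+1)))).add (T3.const_mul (1 / l3 ^ (g+1)))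
  have hpos : ∀ t ∈ Ioo 0 Real.pi, 0 ≤ G t := by
    intro t ht
    refine le_of_tendsto hZ ?_
    filter_upwards [Ioo_mem_nhdsGT ht.1] with s hs
    exact hmono ⟨hs.1, hs.2.trans ht.2⟩ ht hs.2.le
  have hfin := ge_of_tendsto hT (b := 0) (by
    filter_upwards [Ioo_mem_nhdsLT Real.pi_pos] with t ht using hpos t ht)
  have hpi := Real.pi_pos
  have a1 : c₁ / l1 ^ (g+1) * (Real.pi * wright (-α) (-g) (-x₁)) ≤ 0 :=
    mul_nonpos_of_nonneg_of_nonpos (by positivity) (mul_nonpos_of_nonneg_of_nonpos hpi.le f1.le)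
  have a2 : c₂ / l2 ^ (g+1) * (Real.pi * wright (-α) (-g) (-x₂)) ≤ 0 :=
    mul_nonpos_of_nonpos_of_nonneg (div_nonpos_of_nonpos_of_nonneg hc₂ q2.le) (by positivity)
  have a3 : 1 / l3 ^ (g+1) * (Real.pi * wright (-α) (-g) (-x₃)) < 0 :=
    mul_neg_of_pos_of_neg (by positivity) (mul_neg_of_pos_of_neg hpi f3)
  linarith

end WrightAux

namespace WrightAux
open MeasureTheory Set Filter Topology

/-- Near an inflection point, the second derivative takes both signs. -/
lemma infl_pts (f : ℝ → ℝ) (x δ : ℝ) (hδ : 0 < δ) (h : IsInflectionPoint f x) :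
    (∃ y ∈ Ioo (x - δ) (x + δ), 0 < deriv (deriv f) y) ∧
    (∃ y ∈ Ioo (x - δ) (x + δ), deriv (deriv f) y < 0) := by
  obtain ⟨ε, hε, h⟩ := h
  have hm : 0 < min δ ε := lt_min hδ hε
  have h1 := min_le_left δ ε
  have h2 := min_le_right δ ε
  have ml : x - min δ ε / 2 ∈ Ioo (x - δ) (x + δ) := ⟨by linarith, by linarith⟩
  have mr : x + min δ ε / 2 ∈ Ioo (x - δ) (x + δ) := ⟨by linarith, by linarith⟩
  have el : x - min δ ε / 2 ∈ Ioo (x - ε) x := ⟨by linarith, by linarith⟩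
  have er : x + min δ ε / 2 ∈ Ioo x (x + ε) := ⟨by linarith, by linarith⟩
  rcases h with ⟨ha, hb⟩ | ⟨ha, hb⟩
  · exact ⟨⟨_, mr, hb _ er⟩, ⟨_, ml, ha _ el⟩⟩
  · exact ⟨⟨_, ml, ha _ el⟩, ⟨_, mr, hb _ er⟩⟩

end WrightAux

/-- Lemma 2: for `α ∈ [1/2, 1)` and `β ∈ [0, α]`, the function `x ↦ φ(-α, β, -x)`
has at most two inflection points in `(0,∞)`. -/
theorem wright_at_most_two_inflection_points (α β : ℝ)
    (hα : α ∈ Set.Ico (1/2 : ℝ) 1) (hβ : β ∈ Set.Icc (0 : ℝ) α) :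
    ¬ ∃ x₁ x₂ x₃ : ℝ, 0 < x₁ ∧ x₁ < x₂ ∧ x₂ < x₃ ∧
        IsInflectionPoint (fun x => wright (-α) β (-x)) x₁ ∧
        IsInflectionPoint (fun x => wright (-α) β (-x)) x₂ ∧
        IsInflectionPoint (fun x => wright (-α) β (-x)) x₃ := by
  rintro ⟨x₁, x₂, x₃, h0, h12, h23, i1, i2, i3⟩
  obtain ⟨hα1, hα2⟩ := hα
  obtain ⟨hβ1, hβ2⟩ := hβ
  have hα0 : 0 < α := by linarith
  have key : ∀ x, deriv (deriv (fun x => wright (-α) β (-x))) x = wright (-α) (-(2 * α - β)) (-x) := by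
    intro x
    rw [WrightAux.deriv2_wright α β x hα0 hα2 (by linarith)]
    congr 1; ring
  set δ := min x₁ (min (x₂ - x₁) (x₃ - x₂)) / 2 with hδ
  have hδ0 : 0 < δ := by
    have : 0 < min x₁ (min (x₂ - x₁) (x₃ - x₂)) := lt_min h0 (lt_min (by linarith) (by linarith))
    positivity
  have d1 : 2 * δ ≤ x₁ := by
    have := min_le_left x₁ (min (x₂ - x₁) (x₃ - x₂)); linarith
  have d2 : 2 * δ ≤ x₂ - x₁ := by
    have := (min_le_right x₁ (min (x₂ - x₁) (x₃ - x₂))).trans (min_le_left _ _); linarith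
  have d3 : 2 * δ ≤ x₃ - x₂ := by
    have := (min_le_right x₁ (min (x₂ - x₁) (x₃ - x₂))).trans (min_le_right _ _); linarith
  obtain ⟨-, ⟨y1, m1, s1⟩⟩ := WrightAux.infl_pts _ x₁ δ hδ0 i1
  obtain ⟨⟨y2, m2, s2⟩, -⟩ := WrightAux.infl_pts _ x₂ δ hδ0 i2
  obtain ⟨-, ⟨y3, m3, s3⟩⟩ := WrightAux.infl_pts _ x₃ δ hδ0 i3
  rw [key] at s1 s2 s3
  exact WrightAux.core α (2 * α - β) y1 y2 y3 hα0 hα2 (by linarith) (by linarith)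
    (by linarith [m1.1]) (by linarith [m1.2, m2.1]) (by linarith [m2.2, m3.1]) s1 s2 s3
end

section
/- For every α ∈ (0,1) and β ≥ 0, the function t ↦ φ(-α, β, -e^t) is log-concave on ℝ if and only if β ≥ α, or β = 0 and α ≤ 1/2. (Equivalently, the random variable M_{α,β} with density Γ(α+β)·φ(-α,β,-x) is multiplicatively strongly unimodal exactly under these conditions.) -/
/-- `f` is log-concave on the set `S`. -/
def LogConcaveOn' (f : ℝ → ℝ) (S : Set ℝ) : Prop :=
  ∀ x ∈ S, ∀ y ∈ S, ∀ t ∈ Set.Icc (0 : ℝ) 1,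
    f ((1 - t) * x + t * y) ≥ f x ^ (1 - t) * f y ^ t

section Proof
open Finset


noncomputable def wA (γ : ℝ) (N : ℕ) : ℝ := (∏ i ∈ range N, (γ + i)) / (N.factorial : ℝ)

noncomputable def wb (α β : ℝ) (n N : ℕ) : ℝ :=
  ∑ j ∈ range (n + 1), (-1 : ℝ) ^ j * (n.choose j : ℝ) * wA (β - α * j) N

lemma wA_succ (γ : ℝ) (N : ℕ) : ((N : ℝ) + 1) * wA γ (N + 1) = (γ + N) * wA γ N := by
  unfold wA
  rw [prod_range_succ, Nat.factorial_succ]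
  have h1 : (N.factorial : ℝ) ≠ 0 := by positivity
  have h2 : (N : ℝ) + 1 ≠ 0 := by positivity
  push_cast
  field_simp

lemma wb_zero_rec (α β : ℝ) (N : ℕ) :
    ((N : ℝ) + 1) * wb α β 0 (N + 1) = (N + β) * wb α β 0 N := by
  have := wA_succ β N
  simp [wb]
  linarith

lemma wb_succ_rec (α β : ℝ) (n N : ℕ) :
    ((N : ℝ) + 1) * wb α β (n + 1) (N + 1) =
      (N + β - (n + 1) * α) * wb α β (n + 1) N + (n + 1) * α * wb α β n N := by
  have h : ∀ j ∈ range (n + 1), ((n : ℝ) + 1) * (n.choose j : ℝ) =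
      (n + 1 - j) * ((n + 1).choose j : ℝ) := by
    intro j hj
    have hj' : j ≤ n := by simpa [Nat.lt_succ_iff] using hj
    have := Nat.choose_mul_succ_eq n j
    have h2 : ((n.choose j * (n + 1) : ℕ) : ℝ) = (((n + 1).choose j * (n + 1 - j) : ℕ) : ℝ) := by
      rw [this]
    push_cast [Nat.cast_sub (show j ≤ n + 1 by omega)] at h2
    linarith
  have e : ((n : ℝ) + 1) * α * wb α β n N = ∑ j ∈ range (n + 1 + 1),
      α * ((-1 : ℝ) ^ j * ((n + 1 - j) * ((n + 1).choose j : ℝ)) * wA (β - α * j) N) := by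
    rw [sum_range_succ]
    unfold wb
    rw [mul_sum]
    push_cast
    have : ∀ j ∈ range (n + 1), (n + 1) * α * ((-1 : ℝ) ^ j * (n.choose j : ℝ) * wA (β - α * j) N) =
      α * ((-1 : ℝ) ^ j * ((n + 1 - j) * ((n + 1).choose j : ℝ)) * wA (β - α * j) N) := by
      intro j hj
      rw [← h j hj]; ring
    rw [sum_congr rfl this]
    ring
  rw [e]
  unfold wb
  rw [mul_sum, mul_sum, ← sum_add_distrib]
  apply sum_congr rfl
  intro j _
  have := wA_succ (β - α * j) N
  calc _ = (-1 : ℝ) ^ j * ((n + 1).choose j : ℝ) * (((N : ℝ) + 1) * wA (β - α * j) (N + 1)) := by ring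
    _ = _ := by rw [this]; ring

lemma wb_zero_zero (α β : ℝ) : wb α β 0 0 = 1 := by simp [wb, wA]

lemma wb_succ_zero (α β : ℝ) (n : ℕ) : wb α β (n + 1) 0 = 0 := by
  have := Int.alternating_sum_range_choose (n := n + 1)
  have h2 : ((∑ i ∈ range (n + 1 + 1), (-1 : ℤ) ^ i * ((n + 1).choose i : ℤ) : ℤ) : ℝ) = 0 := by
    rw [this]; simp
  push_cast at h2
  simpa [wb, wA] using h2

lemma wb_eq_zero (α β : ℝ) (N : ℕ) : ∀ n, N < n → wb α β n N = 0 := by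
  induction N with
  | zero => intro n hn; obtain ⟨m, rfl⟩ : ∃ m, n = m + 1 := ⟨n - 1, by omega⟩
            exact wb_succ_zero α β m
  | succ N ih =>
    intro n hn
    obtain ⟨m, rfl⟩ : ∃ m, n = m + 1 := ⟨n - 1, by omega⟩
    have := wb_succ_rec α β m N
    rw [ih _ (by omega), ih _ (by omega)] at this
    have h2 : (N : ℝ) + 1 ≠ 0 := by positivity
    simpa [h2] using this

lemma wb_nonneg {α β : ℝ} (h0 : 0 < α) (h1 : α < 1) (hβ : 0 ≤ β) (N : ℕ) :
    ∀ n, 0 ≤ wb α β n N := by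
  induction N with
  | zero =>
    intro n
    rcases n with _ | n
    · rw [wb_zero_zero]; norm_num
    · rw [wb_succ_zero]
  | succ N ih =>
    intro n
    have h2 : (0 : ℝ) < (N : ℝ) + 1 := by positivity
    refine nonneg_of_mul_nonneg_right (a := (N : ℝ) + 1) ?_ h2
    rcases n with _ | n
    · rw [wb_zero_rec]
      have := ih 0
      positivity
    · rw [wb_succ_rec]
      have a1 := ih n
      have a2 := ih (n + 1)
      by_cases hn : n + 1 ≤ N
      · have : ((n : ℝ) + 1) ≤ N := by exact_mod_cast hn
        have : 0 ≤ (N + β - (n + 1) * α) := by nlinarith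
        positivity
      · rw [wb_eq_zero α β N (n + 1) (by omega)]
        have : 0 ≤ (n + 1) * α * wb α β n N := by positivity
        linarith

lemma wb_pos {α β : ℝ} (h0 : 0 < α) (h1 : α < 1) (hβ : 0 < β) (N : ℕ) :
    ∀ n, n ≤ N → 0 < wb α β n N := by
  induction N with
  | zero =>
    intro n hn
    obtain rfl : n = 0 := by omega
    rw [wb_zero_zero]; norm_num
  | succ N ih =>
    intro n hn
    have h2 : (0 : ℝ) < (N : ℝ) + 1 := by positivity
    refine pos_of_mul_pos_right (a := (N : ℝ) + 1) ?_ h2.le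
    rcases n with _ | n
    · rw [wb_zero_rec]
      have := ih 0 (by omega)
      positivity
    · rw [wb_succ_rec]
      have a1 := ih n (by omega)
      by_cases hn : n + 1 ≤ N
      · have a2 := ih (n + 1) hn
        have : ((n : ℝ) + 1) ≤ N := by exact_mod_cast hn
        have : 0 < (N + β - (n + 1) * α) := by nlinarith
        positivity
      · rw [wb_eq_zero α β N (n + 1) (by omega)]
        have : 0 < (n + 1) * α * wb α β n N := by positivity
        linarith

/-- The Kurtz-type inequality. -/
lemma kurtz_step (a α m t0 t1 t2 t3 : ℝ) (hα : 0 < α) (hm : 0 ≤ m)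
    (c1 : t0 * t2 ≤ t1 ^ 2)
    (c2' : a * (t1 * t3) ≤ a * t2 ^ 2)
    (c2'' : a * a * (t1 * t3) ≤ a * a * t2 ^ 2)
    (c3 : a * (t0 * t3) ≤ a * (t1 * t2)) :
    ((a + 2 * α) * t1 + α * m * t0) * (a * t3 + α * (m + 2) * t2) ≤
      ((a + α) * t2 + α * (m + 1) * t1) ^ 2 := by
  have e1 := mul_le_mul_of_nonneg_left c3 (mul_nonneg hα.le hm)
  have e2 := mul_le_mul_of_nonneg_left c1 (show 0 ≤ α * α * m * (m + 2) by positivity)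
  have e3 := mul_le_mul_of_nonneg_left c2' hα.le
  nlinarith [sq_nonneg (α * (t1 - t2))]

lemma wb_logconcave {α β : ℝ} (h0 : 0 < α) (h1 : α < 1) (hβα : α ≤ β) (N : ℕ) :
    ∀ n, wb α β n N * wb α β (n + 2) N ≤ wb α β (n + 1) N ^ 2 := by
  have hβ : 0 < β := h0.trans_le hβα
  induction N with
  | zero => intro n; rw [wb_succ_zero α β (n + 1)]; simp; positivity
  | succ N ih =>
    intro n
    by_cases hn : N + 1 < n + 2
    · rw [wb_eq_zero α β (N + 1) (n + 2) hn]; simp; positivity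
    have h2 : (0 : ℝ) < (N : ℝ) + 1 := by positivity
    have hp := fun k => wb_nonneg h0 h1 hβ.le N k
    suffices H : (((N : ℝ) + 1) * wb α β n (N + 1)) * (((N : ℝ) + 1) * wb α β (n + 2) (N + 1)) ≤
        (((N : ℝ) + 1) * wb α β (n + 1) (N + 1)) ^ 2 by
      have h3 : 0 < ((N : ℝ) + 1) ^ 2 := by positivity
      refine le_of_mul_le_mul_left ?_ h3
      linarith
    have key : ∀ t0 m : ℝ, 0 ≤ t0 → 0 ≤ m → m = n → t0 * wb α β (n + 1) N ≤ wb α β n N ^ 2 →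
        t0 * wb α β (n + 2) N ≤ wb α β n N * wb α β (n + 1) N →
        ((N + β - m * α) * wb α β n N + m * α * t0) *
        ((N + β - (m + 2) * α) * wb α β (n + 2) N + (m + 2) * α * wb α β (n + 1) N) ≤
        ((N + β - (m + 1) * α) * wb α β (n + 1) N + (m + 1) * α * wb α β n N) ^ 2 := by
      intro t0 m ht0 hm hmn q1 q2
      by_cases hn2 : n + 2 ≤ N
      · have hc : ((n : ℝ) + 2) ≤ N := by exact_mod_cast hn2
        have ha : 0 ≤ N + β - (m + 2) * α := by subst hmn; nlinarith
        have := kurtz_step (N + β - (m + 2) * α) α m t0 (wb α β n N) (wb α β (n + 1) N)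
          (wb α β (n + 2) N) h0 hm q1
          (mul_le_mul_of_nonneg_left (ih n) ha)
          (mul_le_mul_of_nonneg_left (ih n) (mul_nonneg ha ha))
          (mul_le_mul_of_nonneg_left q2 ha)
        convert this using 2 <;> ring
      · rw [wb_eq_zero α β N (n + 2) (by omega)]
        have hc : (n : ℝ) + 1 ≤ N := by
          have : n + 1 ≤ N := by omega
          exact_mod_cast this
        have ha' : α ≤ N + β - (m + 1) * α := by subst hmn; nlinarith
        have ha := h0.le.trans ha'
        generalize hA : N + β - (m + 1) * α = A at *
        have hA' : N + β - m * α = A + α := by linarith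
        rw [hA']
        have x1 := hp n
        have x2 := hp (n + 1)
        generalize wb α β n N = t1 at *
        generalize wb α β (n + 1) N = t2 at *
        have e2 := mul_le_mul_of_nonneg_left q1 (show 0 ≤ α * α * m * (m + 2) by positivity)
        have e3 : 0 ≤ α * (A - α) * (m + 2) * (t1 * t2) := by
          have : 0 ≤ A - α := by linarith
          positivity
        nlinarith [sq_nonneg (α * t1 - A * t2)]
    have r2 := wb_succ_rec α β (n + 1) N
    have r1 := wb_succ_rec α β n N
    push_cast at r2
    rw [r1, r2]
    rcases n with _ | n
    · rw [wb_zero_rec]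
      have := key 0 0 le_rfl le_rfl (by simp) (by simp; positivity) (by
        have := mul_nonneg (hp 0) (hp 1); simpa using this)
      simp only [Nat.cast_zero] at this ⊢
      convert this using 2 <;> ring
    · rw [wb_succ_rec]
      have := key (wb α β n N) (n + 1) (hp n) (by positivity) (by push_cast; ring) (ih n) (by
        by_cases hN : N < n + 3
        · rw [wb_eq_zero α β N (n + 1 + 2) hN]
          have := mul_nonneg (hp (n + 1)) (hp (n + 1 + 1)); simpa using this
        · have y1 := wb_pos h0 h1 hβ N (n + 1) (by omega)
          have y2 := wb_pos h0 h1 hβ N (n + 2) (by omega)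
          have z1 := ih n
          have z2 := ih (n + 1)
          have y0 := hp n
          have y3 := hp (n + 3)
          have : (wb α β n N * wb α β (n + 2) N) * (wb α β (n + 1) N * wb α β (n + 1 + 2) N) ≤
            (wb α β (n + 1) N ^ 2) * (wb α β (n + 1 + 1) N ^ 2) :=
            mul_le_mul z1 z2 (mul_nonneg y1.le y3) (by positivity)
          refine le_of_mul_le_mul_left ?_ (mul_pos y1 y2)
          calc _ = _ := by ring
            _ ≤ _ := this
            _ = _ := by ring)
      push_cast at this ⊢
      convert this using 2 <;> ring

lemma wb_sub (α β : ℝ) (n N : ℕ) : wb α β n N - wb α β (n + 1) N = wb α (β - α) n N := by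
  have e : wb α β (n + 1) N = wb α β n N - wb α (β - α) n N := by
    have e1 : wb α β n N = ∑ j ∈ range (n + 1 + 1),
        (-1 : ℝ) ^ j * (n.choose j : ℝ) * wA (β - α * j) N := by
      rw [sum_range_succ]; simp [wb]
    rw [e1]
    unfold wb
    rw [sum_range_succ', sum_range_succ' _ (n + 1)]
    simp only [Nat.choose_succ_succ]
    have : ∀ j ∈ range (n + 1), (-1 : ℝ) ^ (j + 1) * ((n.choose j + n.choose (j + 1) : ℕ) : ℝ) *
        wA (β - α * ((j + 1 : ℕ) : ℝ)) N =
        (-1 : ℝ) ^ (j + 1) * ((n.choose (j + 1) : ℕ) : ℝ) * wA (β - α * ((j + 1 : ℕ) : ℝ)) N -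
        (-1 : ℝ) ^ j * (n.choose j : ℝ) * wA (β - α - α * j) N := by
      intro j _
      have : β - α - α * j = β - α * ((j + 1 : ℕ) : ℝ) := by push_cast; ring
      rw [this]
      push_cast
      ring
    rw [sum_congr rfl this, sum_sub_distrib]
    simp
    ring
  linarith

lemma wb_antitone {α β : ℝ} (h0 : 0 < α) (h1 : α < 1) (hβ : α ≤ β) (N : ℕ) :
    Antitone fun n => wb α β n N := by
  apply antitone_nat_of_succ_le
  intro n
  have := wb_sub α β n N
  have := wb_nonneg h0 h1 (sub_nonneg.2 hβ) N n
  linarith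

/-- weighted log-concavity along the sequence -/
lemma wb_weighted {α β : ℝ} (h0 : 0 < α) (h1 : α < 1) (hβα : α ≤ β) (N n1 n n2 : ℕ)
    (h12 : n1 ≤ n) (h23 : n ≤ n2) (hlt : n1 < n2) (hN : n2 ≤ N) :
    wb α β n1 N ^ (((n2 : ℝ) - n) / (n2 - n1)) * wb α β n2 N ^ (((n : ℝ) - n1) / (n2 - n1)) ≤
      wb α β n N := by
  have hβ : 0 < β := h0.trans_le hβα
  have hpos := wb_pos h0 h1 hβ N
  set L : ℕ → ℝ := fun k => Real.log (wb α β k N) with hL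
  have conc : ∀ k, k + 2 ≤ N → L k + L (k + 2) ≤ 2 * L (k + 1) := by
    intro k hk
    have := Real.log_le_log (mul_pos (hpos k (by omega)) (hpos (k + 2) hk))
      (wb_logconcave h0 h1 hβα N k)
    rw [Real.log_mul (hpos k (by omega)).ne' (hpos (k + 2) hk).ne', Real.log_pow] at this
    simpa [hL] using this
  have anti : ∀ d k, k + d + 1 ≤ N → L (k + d + 1) - L (k + d) ≤ L (k + 1) - L k := by
    intro d
    induction d with
    | zero => intro k _; simp
    | succ d ih =>
      intro k hk
      have a := ih k (by omega)
      have b := conc (k + d) (by omega)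
      have e1 : k + (d + 1) + 1 = k + d + 2 := by ring
      have e2 : k + (d + 1) = k + d + 1 := by ring
      rw [e1, e2]
      linarith
  have up : ∀ v k, k + 1 ≤ N → k + v ≤ N → L (k + v) - L k ≤ v * (L (k + 1) - L k) := by
    intro v
    induction v with
    | zero => intro k _ _; simp
    | succ v ih =>
      intro k hk hk2
      have a := ih k hk (by omega)
      have b := anti v k (by omega)
      push_cast
      rw [← add_assoc]
      linarith
  have dn : ∀ u k, k + u + 1 ≤ N → u * (L (k + u + 1) - L (k + u)) ≤ L (k + u) - L k := by
    intro u
    induction u with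
    | zero => intro k _; simp
    | succ u ih =>
      intro k hk
      have a := ih (k + 1) (by omega)
      have b := anti (u + 1) k (by omega)
      have e1 : k + 1 + u = k + (u + 1) := by ring
      rw [e1] at a
      push_cast
      linarith
  obtain ⟨u, rfl⟩ := Nat.exists_eq_add_of_le h12
  obtain ⟨v, rfl⟩ := Nat.exists_eq_add_of_le h23
  have main : (v : ℝ) * L n1 + u * L (n1 + u + v) ≤ (u + v) * L (n1 + u) := by
    rcases Nat.eq_zero_or_pos v with rfl | hv
    · simp
    have a := dn u n1 (by omega)
    have b := up v (n1 + u) (by omega) (by omega)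
    have a' := mul_le_mul_of_nonneg_left a (Nat.cast_nonneg (α := ℝ) v)
    have b' := mul_le_mul_of_nonneg_left b (Nat.cast_nonneg (α := ℝ) u)
    linarith
  have huv : (0 : ℝ) < u + v := by
    have : 0 < u + v := by omega
    exact_mod_cast this
  have g1 := hpos n1 (by omega)
  have g2 := hpos (n1 + u) (by omega)
  have g3 := hpos (n1 + u + v) (by omega)
  rw [← Real.log_le_log_iff (by positivity) g2, Real.log_mul (by positivity) (by positivity),
    Real.log_rpow g1, Real.log_rpow g3]
  have f1 : (((n1 + u + v : ℕ) : ℝ) - (n1 + u : ℕ)) / ((n1 + u + v : ℕ) - n1) = v / (u + v) := by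
    push_cast; congr 1 <;> ring
  have f2 : (((n1 + u : ℕ) : ℝ) - n1) / ((n1 + u + v : ℕ) - n1) = u / (u + v) := by
    push_cast; congr 1 <;> ring
  rw [f1, f2]
  change (v / (u + v) : ℝ) * L n1 + (u / (u + v) : ℝ) * L (n1 + u + v) ≤ L (n1 + u)
  rw [div_mul_eq_mul_div, div_mul_eq_mul_div, ← add_div, div_le_iff₀ huv]
  linarith

lemma wA_tendsto (γ : ℝ) : Filter.Tendsto (fun N : ℕ => (N : ℝ) ^ (1 - γ) * wA γ N)
    Filter.atTop (nhds (Real.Gamma γ)⁻¹) := by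
  by_cases hG : Real.Gamma γ = 0
  · obtain ⟨m, rfl⟩ := (Real.Gamma_eq_zero_iff γ).1 hG
    rw [hG, inv_zero]
    apply tendsto_const_nhds.congr'
    filter_upwards [Filter.eventually_gt_atTop m] with N hN
    have : ∏ i ∈ range N, (-(m : ℝ) + i) = 0 :=
      prod_eq_zero (mem_range.2 hN) (by simp)
    simp [wA, this]
  · have h1 := (Real.GammaSeq_tendsto_Gamma γ).inv₀ hG
    have h2 : Filter.Tendsto (fun N : ℕ => (N : ℝ) / (γ + N)) Filter.atTop (nhds 1) := by
      have := tendsto_natCast_div_add_atTop (𝕜 := ℝ) γ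
      refine this.congr fun n => ?_
      rw [add_comm]
    have h3 := h2.mul h1
    rw [one_mul] at h3
    refine h3.congr' ?_
    filter_upwards [Filter.eventually_gt_atTop ⌈|γ|⌉₊, Filter.eventually_gt_atTop 0] with N hN hN0
    have hN' : |γ| < N := Nat.lt_of_ceil_lt hN
    have hne : γ + N ≠ 0 := by
      have := neg_abs_le γ
      linarith
    have hNp : (0 : ℝ) < N := by exact_mod_cast hN0
    rw [Real.GammaSeq, prod_range_succ, wA, Real.rpow_sub hNp, Real.rpow_one]
    have := Real.rpow_pos_of_pos hNp γ
    have h1 : (N.factorial : ℝ) ≠ 0 := by positivity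
    rw [inv_div]
    field_simp

lemma gamma_mul_rpow_le {y r : ℝ} (hy : 0 < y) (hr : 1 ≤ r) :
    Real.Gamma y * y ^ r ≤ Real.Gamma (y + r) := by
  rcases hr.eq_or_lt with rfl | hr
  · rw [Real.rpow_one, Real.Gamma_add_one hy.ne', mul_comm]
  have hr0 : 0 < r := by linarith
  have h := Real.Gamma_mul_add_mul_le_rpow_Gamma_mul_rpow_Gamma (s := y) (t := y + r)
    (a := 1 - 1 / r) (b := 1 / r) hy (by linarith)
    (by rw [sub_pos, div_lt_one hr0]; exact hr) (by positivity) (by ring)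
  have e : (1 - 1 / r) * y + 1 / r * (y + r) = y + 1 := by field_simp; ring
  rw [e, Real.Gamma_add_one hy.ne'] at h
  have G1 := Real.Gamma_pos_of_pos hy
  have G2 := Real.Gamma_pos_of_pos (show 0 < y + r by linarith)
  have h2 := Real.rpow_le_rpow (by positivity) h hr0.le
  rw [Real.mul_rpow hy.le G1.le, Real.mul_rpow (by positivity) (by positivity),
    ← Real.rpow_mul G1.le, ← Real.rpow_mul G2.le, one_div_mul_cancel hr0.ne', Real.rpow_one] at h2
  have e2 : (1 - 1 / r) * r = r - 1 := by field_simp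
  rw [e2, Real.rpow_sub G1, Real.rpow_one] at h2
  have := Real.rpow_pos_of_pos G1 r
  rw [div_mul_eq_mul_div, le_div_iff₀ G1] at h2
  refine le_of_mul_le_mul_left ?_ this
  linarith

lemma gamma_add_le {y a : ℝ} (hy : 0 < y) (ha : 0 < a) (ha1 : a < 1) :
    Real.Gamma (y + a) ≤ Real.Gamma y * y ^ a := by
  have h := Real.Gamma_mul_add_mul_le_rpow_Gamma_mul_rpow_Gamma (s := y) (t := y + 1)
    (a := 1 - a) (b := a) hy (by linarith) (by linarith) ha (by ring)
  have e : (1 - a) * y + a * (y + 1) = y + a := by ring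
  have G1 := Real.Gamma_pos_of_pos hy
  rw [e, Real.Gamma_add_one hy.ne', Real.mul_rpow hy.le G1.le, Real.rpow_sub G1, Real.rpow_one] at h
  have := Real.rpow_pos_of_pos G1 a
  calc _ ≤ _ := h
    _ = _ := by field_simp

lemma abs_inv_gamma_neg_le {s : ℝ} (hs : 0 ≤ s) : |(Real.Gamma (-s))⁻¹| ≤ Real.Gamma (1 + s) := by
  have G := Real.Gamma_pos_of_pos (show 0 < 1 + s by linarith)
  by_cases h0 : Real.Gamma (-s) = 0
  · simp [h0, G.le]
  have h := Real.Gamma_mul_Gamma_one_sub (-s)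
  rw [sub_neg_eq_add] at h
  have hs0 : Real.sin (Real.pi * -s) ≠ 0 := by
    intro hz
    rw [hz, div_zero] at h
    exact (mul_ne_zero h0 G.ne') h
  have e : (Real.Gamma (-s))⁻¹ = Real.Gamma (1 + s) * (Real.sin (Real.pi * -s) / Real.pi) := by
    have hp := Real.pi_ne_zero
    rw [eq_div_iff hs0] at h
    apply inv_eq_of_mul_eq_one_right
    rw [← mul_assoc, mul_div_assoc', h, div_self hp]
  rw [e, abs_mul, abs_of_pos G, abs_div, abs_of_pos Real.pi_pos]
  have : |Real.sin (Real.pi * -s)| / Real.pi ≤ 1 := by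
    rw [div_le_one Real.pi_pos]
    exact (Real.abs_sin_le_one _).trans (by linarith [Real.pi_gt_three])
  nlinarith

lemma prod_gamma (γ : ℝ) (h : ∀ m : ℕ, γ ≠ -m) (N : ℕ) :
    Real.Gamma (γ + N) = (∏ i ∈ range N, (γ + i)) * Real.Gamma γ := by
  induction N with
  | zero => simp
  | succ N ih =>
    have : γ + N ≠ 0 := fun e => h N (by linarith)
    rw [prod_range_succ, Nat.cast_succ, ← add_assoc, Real.Gamma_add_one this, ih]
    ring

lemma wA_bound {s : ℝ} {N : ℕ} (hs : 0 ≤ s) (hN : 1 ≤ N) (hsN : s ≤ N / 2) :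
    (N : ℝ) ^ (1 + s) * |wA (-s) N| ≤ 2 ^ (1 + s) * Real.Gamma (1 + s) := by
  have G := Real.Gamma_pos_of_pos (show 0 < 1 + s by linarith)
  have hNp : (1 : ℝ) ≤ N := by exact_mod_cast hN
  by_cases h : ∃ m : ℕ, -s = -(m : ℝ)
  · obtain ⟨m, hm⟩ := h
    have hsm : s = m := by linarith
    subst hsm
    have hmN : m < N := by
      have : (m : ℝ) < N := by linarith
      exact_mod_cast this
    have : ∏ i ∈ range N, (-(m : ℝ) + i) = 0 :=
      prod_eq_zero (mem_range.2 hmN) (by simp)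
    simp only [wA, this, zero_div, abs_zero, mul_zero]
    positivity
  · push Not at h
    have hG0 : Real.Gamma (-s) ≠ 0 := by
      rw [Ne, Real.Gamma_eq_zero_iff]
      push Not
      exact h
    have hp := prod_gamma (-s) h N
    have e : wA (-s) N = (Real.Gamma (-s))⁻¹ * (Real.Gamma (-s + N) / Real.Gamma (N + 1)) := by
      rw [wA, hp, Real.Gamma_nat_eq_factorial]
      field_simp
    have hy : 0 < -s + N := by linarith
    have k := gamma_mul_rpow_le hy (show 1 ≤ 1 + s by linarith)
    have e2 : -s + N + (1 + s) = N + 1 := by ring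
    rw [e2] at k
    have G1 := Real.Gamma_pos_of_pos hy
    have G2 := Real.Gamma_pos_of_pos (show (0 : ℝ) < N + 1 by positivity)
    rw [e, abs_mul, abs_of_pos (div_pos G1 G2)]
    have b1 := abs_inv_gamma_neg_le hs
    have b2 : (N : ℝ) ^ (1 + s) * (Real.Gamma (-s + N) / Real.Gamma (N + 1)) ≤ 2 ^ (1 + s) := by
      rw [mul_div_assoc', div_le_iff₀ G2]
      have : (N : ℝ) ^ (1 + s) ≤ 2 ^ (1 + s) * (-s + N) ^ (1 + s) := by
        rw [← Real.mul_rpow (by norm_num) hy.le]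
        exact Real.rpow_le_rpow (by positivity) (by linarith) (by linarith)
      calc _ ≤ 2 ^ (1 + s) * (-s + N) ^ (1 + s) * Real.Gamma (-s + N) := by gcongr
        _ = 2 ^ (1 + s) * (Real.Gamma (-s + N) * (-s + N) ^ (1 + s)) := by ring
        _ ≤ _ := by gcongr
    calc _ = ((N : ℝ) ^ (1 + s) * (Real.Gamma (-s + N) / Real.Gamma (N + 1))) *
          |(Real.Gamma (-s))⁻¹| := by ring
      _ ≤ _ := by gcongr

/-- dominating sequence -/
noncomputable def wdom (α β y : ℝ) (j : ℕ) : ℝ :=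
  2 ^ (1 + (α * j - β)) * Real.Gamma (1 + (α * j - β)) * (y ^ j / (j.factorial : ℝ))

lemma wdom_summable {α β y : ℝ} (h0 : 0 < α) (h1 : α < 1) (hβ : 0 ≤ β) (hy : 0 < y) :
    Summable (wdom α β y) := by
  have hlim : Filter.Tendsto (fun j : ℕ => 2 * y * ((j : ℝ) + 1) ^ (-(1 - α))) Filter.atTop
      (nhds 0) := by
    have a : Filter.Tendsto (fun j : ℕ => (j : ℝ) + 1) Filter.atTop Filter.atTop :=
      Filter.tendsto_atTop_add_const_right _ _ tendsto_natCast_atTop_atTop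
    have := ((tendsto_rpow_neg_atTop (show 0 < 1 - α by linarith)).comp a).const_mul (2 * y)
    simpa using this
  have hev : ∀ᶠ j : ℕ in Filter.atTop, 0 ≤ α * j - β := by
    filter_upwards [Filter.eventually_ge_atTop ⌈β / α⌉₊] with j hj
    have := Nat.le_of_ceil_le hj
    rw [div_le_iff₀ h0] at this
    linarith
  refine summable_of_ratio_norm_eventually_le (r := 1 / 2) (by norm_num) ?_
  filter_upwards [hev, hlim.eventually_le_const (show (0 : ℝ) < 1 / 2 by norm_num)] with j hj hj2
  set Y := 1 + (α * j - β) with hY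
  have hYp : 0 < Y := by linarith
  have hYle : Y ≤ j + 1 := by nlinarith [Nat.cast_nonneg (α := ℝ) j]
  have eY : 1 + (α * ((j + 1 : ℕ) : ℝ) - β) = Y + α := by rw [hY]; push_cast; ring
  have G := Real.Gamma_pos_of_pos hYp
  have G' := Real.Gamma_pos_of_pos (show 0 < Y + α by linarith)
  unfold wdom
  rw [eY, ← hY, Real.norm_of_nonneg (by positivity), Real.norm_of_nonneg (by positivity)]
  have hj1 : (0 : ℝ) < (j : ℝ) + 1 := by positivity
  have b1 : (2 : ℝ) ^ (Y + α) ≤ 2 ^ Y * 2 := by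
    rw [Real.rpow_add (by norm_num)]
    gcongr
    calc (2 : ℝ) ^ α ≤ 2 ^ (1 : ℝ) := Real.rpow_le_rpow_of_exponent_le (by norm_num) h1.le
      _ = 2 := by simp
  have b2 : Real.Gamma (Y + α) ≤ Real.Gamma Y * ((j : ℝ) + 1) ^ α :=
    (gamma_add_le hYp h0 h1).trans (by gcongr)
  have e3 : ((j : ℝ) + 1) ^ (-(1 - α)) = ((j : ℝ) + 1) ^ α / (j + 1) := by
    rw [neg_sub, Real.rpow_sub hj1, Real.rpow_one]
  rw [e3] at hj2
  rw [pow_succ, Nat.factorial_succ]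
  push_cast
  calc _ ≤ (2 ^ Y * 2) * (Real.Gamma Y * ((j : ℝ) + 1) ^ α) *
        (y ^ j * y / (((j : ℝ) + 1) * (j.factorial : ℝ))) := by gcongr
    _ = (2 * y * (((j : ℝ) + 1) ^ α / (j + 1))) *
        (2 ^ Y * Real.Gamma Y * (y ^ j / (j.factorial : ℝ))) := by
      field_simp
    _ ≤ _ := by gcongr

lemma choose_tendsto {α x : ℝ} (h0 : 0 < α) (n : ℕ → ℕ)
    (hn : Filter.Tendsto (fun N : ℕ => (n N : ℝ) / (N : ℝ) ^ α) Filter.atTop (nhds x)) (j : ℕ) :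
    Filter.Tendsto (fun N : ℕ => ((n N).choose j : ℝ) / (N : ℝ) ^ (α * j)) Filter.atTop
      (nhds (x ^ j / (j.factorial : ℝ))) := by
  induction j with
  | zero => simp
  | succ j ih =>
    have a : Filter.Tendsto (fun N : ℕ => (j : ℝ) / (N : ℝ) ^ α) Filter.atTop (nhds 0) :=
      Filter.Tendsto.div_atTop tendsto_const_nhds
        ((tendsto_rpow_atTop h0).comp tendsto_natCast_atTop_atTop)
    have b := (ih.mul (hn.sub a)).div_const ((j : ℝ) + 1)
    have e : x ^ j / (j.factorial : ℝ) * (x - 0) / ((j : ℝ) + 1) =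
        x ^ (j + 1) / ((j + 1).factorial : ℝ) := by
      rw [Nat.factorial_succ, pow_succ]; push_cast; field_simp; ring
    rw [e] at b
    refine b.congr' ?_
    filter_upwards [Filter.eventually_gt_atTop 0] with N hN
    have hNp : (0 : ℝ) < N := by exact_mod_cast hN
    have c : ((n N).choose (j + 1) : ℝ) * (j + 1) = (n N).choose j * ((n N : ℝ) - j) := by
      by_cases hj : j ≤ n N
      · have := Nat.choose_succ_right_eq (n N) j
        have h2 : (((n N).choose (j + 1) * (j + 1) : ℕ) : ℝ) =
          (((n N).choose j * (n N - j) : ℕ) : ℝ) := by rw [this]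
        push_cast [Nat.cast_sub hj] at h2
        exact h2
      · rw [Nat.choose_eq_zero_of_lt (by omega), Nat.choose_eq_zero_of_lt (by omega)]; simp
    have e2 : (N : ℝ) ^ (α * ((j + 1 : ℕ) : ℝ)) = (N : ℝ) ^ (α * j) * (N : ℝ) ^ α := by
      rw [← Real.rpow_add hNp]; push_cast; ring_nf
    have hj1 : (0 : ℝ) < (j : ℝ) + 1 := by positivity
    have p1 := Real.rpow_pos_of_pos hNp α
    have p2 := Real.rpow_pos_of_pos hNp (α * j)
    rw [e2]
    have c' : ((n N).choose (j + 1) : ℝ) = (n N).choose j * ((n N : ℝ) - j) / (j + 1) := by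
      rw [eq_div_iff hj1.ne', c]
    rw [c']
    field_simp

theorem wb_limit {α β x : ℝ} (h0 : 0 < α) (h1 : α < 1) (hβ : 0 ≤ β) (hx : 0 ≤ x) (n : ℕ → ℕ)
    (hn : Filter.Tendsto (fun N : ℕ => (n N : ℝ) / (N : ℝ) ^ α) Filter.atTop (nhds x)) :
    Filter.Tendsto (fun N : ℕ => (N : ℝ) ^ (1 - β) * wb α β (n N) N) Filter.atTop
      (nhds (wright (-α) β (-x))) := by
  have hC : ∀ j : ℕ, ∃ C : ℝ, 0 ≤ C ∧ ∀ N : ℕ,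
      (N : ℝ) ^ (1 - (β - α * j)) * |wA (β - α * j) N| ≤ C := by
    intro j
    obtain ⟨C, hC⟩ := (wA_tendsto (β - α * j)).abs.bddAbove_range
    have hC' : ∀ N : ℕ, (N : ℝ) ^ (1 - (β - α * j)) * |wA (β - α * j) N| ≤ C := by
      intro N
      have := hC (Set.mem_range_self N)
      rw [abs_mul, abs_of_nonneg (by positivity : (0 : ℝ) ≤ (N : ℝ) ^ (1 - (β - α * j)))] at this
      exact this
    exact ⟨C, le_trans (by positivity) (hC' 0), hC'⟩
  choose C hC0 hC using hC
  set y := x + 1 with hy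
  have hyp : 0 < y := by linarith
  set bound : ℕ → ℝ := fun j => if α * j < β then C j * (y ^ j / (j.factorial : ℝ)) else
    wdom α β y j with hbound
  have hbs : Summable bound := by
    refine (wdom_summable (y := y) h0 h1 hβ hyp).congr_cofinite ?_
    rw [Nat.cofinite_eq_atTop]
    filter_upwards [Filter.eventually_ge_atTop ⌈β / α⌉₊] with j hj
    have := Nat.le_of_ceil_le hj
    rw [div_le_iff₀ h0] at this
    have : ¬ (α * j < β) := by linarith
    simp [hbound, this]
  set F : ℕ → ℕ → ℝ := fun N j =>
    (N : ℝ) ^ (1 - β) * ((-1 : ℝ) ^ j * ((n N).choose j : ℝ) * wA (β - α * j) N) with hF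
  have hFe : ∀ N j : ℕ, 0 < N → F N j = (-1 : ℝ) ^ j * (((n N).choose j : ℝ) / (N : ℝ) ^ (α * j)) *
      ((N : ℝ) ^ (1 - (β - α * j)) * wA (β - α * j) N) := by
    intro N j hN
    have hNp : (0 : ℝ) < N := by exact_mod_cast hN
    have e : (1 - (β - α * j)) = (1 - β) + α * j := by ring
    have p2 := Real.rpow_pos_of_pos hNp (α * j)
    simp only [hF]
    rw [e, Real.rpow_add hNp]
    field_simp
  have hsum : ∀ N : ℕ, (N : ℝ) ^ (1 - β) * wb α β (n N) N = ∑' j, F N j := by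
    intro N
    rw [tsum_eq_sum (s := range (n N + 1)), wb, mul_sum]
    intro j hj
    have : n N < j := by simpa using hj
    simp [hF, Nat.choose_eq_zero_of_lt this]
  simp_rw [hsum]
  unfold wright
  refine tendsto_tsum_of_dominated_convergence hbs ?_ ?_
  · intro j
    have a := ((choose_tendsto h0 n hn j).const_mul ((-1 : ℝ) ^ j)).mul (wA_tendsto (β - α * j))
    have e : (-1 : ℝ) ^ j * (x ^ j / (j.factorial : ℝ)) * (Real.Gamma (β - α * j))⁻¹ =
        (-x) ^ j / ((j.factorial : ℝ) * Real.Gamma (β + -α * j)) := by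
      rw [neg_pow x, show β + -α * j = β - α * j by ring, div_eq_mul_inv, div_eq_mul_inv, mul_inv]
      ring
    rw [e] at a
    refine a.congr' ?_
    filter_upwards [Filter.eventually_gt_atTop 0] with N hN
    rw [hFe N j hN]
  · have hlim : Filter.Tendsto (fun N : ℕ => y * (N : ℝ) ^ (-(1 - α))) Filter.atTop (nhds 0) := by
      have := ((tendsto_rpow_neg_atTop (show 0 < 1 - α by linarith)).comp
        tendsto_natCast_atTop_atTop).const_mul y
      simpa using this
    filter_upwards [Filter.eventually_gt_atTop 0, hn.eventually_le_const (show x < y by linarith),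
      hlim.eventually_le_const (show (0 : ℝ) < 1 / 2 by norm_num)] with N hN hN2 hN3 j
    have hNp : (0 : ℝ) < N := by exact_mod_cast hN
    have pα := Real.rpow_pos_of_pos hNp α
    have pαj := Real.rpow_pos_of_pos hNp (α * j)
    have hnN : (n N : ℝ) ≤ y * (N : ℝ) ^ α := by rwa [div_le_iff₀ pα] at hN2
    have hb0 : 0 ≤ bound j := by
      simp only [hbound]
      split_ifs with h
      · have := hC0 j
        positivity
      · have := Real.Gamma_pos_of_pos (show 0 < 1 + (α * j - β) by linarith)
        unfold wdom
        positivity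
    by_cases hj : n N < j
    · simpa [hF, Nat.choose_eq_zero_of_lt hj] using hb0
    push Not at hj
    rw [hFe N j hN]
    have c1 : ((n N).choose j : ℝ) / (N : ℝ) ^ (α * j) ≤ y ^ j / (j.factorial : ℝ) := by
      rw [div_le_iff₀ pαj]
      calc ((n N).choose j : ℝ) ≤ (n N : ℝ) ^ j / (j.factorial : ℝ) := Nat.choose_le_pow_div j (n N)
        _ ≤ (y * (N : ℝ) ^ α) ^ j / (j.factorial : ℝ) := by gcongr
        _ = _ := by
          rw [mul_pow, Real.rpow_mul hNp.le, Real.rpow_natCast]; ring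
    have c2 : (N : ℝ) ^ (1 - (β - α * j)) * |wA (β - α * j) N| * (y ^ j / (j.factorial : ℝ))
        ≤ bound j := by
      simp only [hbound]
      split_ifs with h
      · have := hC j N
        gcongr
      · unfold wdom
        have hs : 0 ≤ α * j - β := by linarith
        have hsN : α * j - β ≤ N / 2 := by
          have hjn : (j : ℝ) ≤ n N := by exact_mod_cast hj
          have e3 : (N : ℝ) ^ (-(1 - α)) = (N : ℝ) ^ α / N := by
            rw [neg_sub, Real.rpow_sub hNp, Real.rpow_one]
          rw [e3, mul_div_assoc', div_le_iff₀ hNp] at hN3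
          nlinarith [Nat.cast_nonneg (α := ℝ) j]
        have := wA_bound hs (by omega) hsN
        rw [neg_sub] at this
        have e : 1 - (β - α * j) = 1 + (α * j - β) := by ring
        rw [e]
        gcongr
    have e : ‖(-1 : ℝ) ^ j * (((n N).choose j : ℝ) / (N : ℝ) ^ (α * j)) *
      ((N : ℝ) ^ (1 - (β - α * j)) * wA (β - α * j) N)‖ =
      ((N : ℝ) ^ (1 - (β - α * j)) * |wA (β - α * j) N|) *
        (((n N).choose j : ℝ) / (N : ℝ) ^ (α * j)) := by
      have q1 : (0 : ℝ) ≤ ((n N).choose j : ℝ) / (N : ℝ) ^ (α * j) := by positivity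
      have q2 : (0 : ℝ) ≤ (N : ℝ) ^ (1 - (β - α * j)) := by positivity
      rw [Real.norm_eq_abs, abs_mul, abs_mul, abs_mul, abs_pow, abs_neg, abs_one, one_pow, one_mul,
        abs_of_nonneg q1, abs_of_nonneg q2]
      ring
    rw [e]
    refine le_trans ?_ c2
    gcongr

lemma floor_tendsto {α x : ℝ} (h0 : 0 < α) (hx : 0 ≤ x) :
    Filter.Tendsto (fun N : ℕ => ((⌊x * (N : ℝ) ^ α⌋₊ : ℕ) : ℝ) / (N : ℝ) ^ α) Filter.atTop
      (nhds x) :=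
  (tendsto_nat_floor_mul_div_atTop hx).comp
    ((tendsto_rpow_atTop h0).comp tendsto_natCast_atTop_atTop)

lemma wright_nonneg {α β x : ℝ} (h0 : 0 < α) (h1 : α < 1) (hβ : 0 ≤ β) (hx : 0 ≤ x) :
    0 ≤ wright (-α) β (-x) := by
  refine ge_of_tendsto' (wb_limit h0 h1 hβ hx _ (floor_tendsto h0 hx)) fun N => ?_
  have := wb_nonneg h0 h1 hβ N ⌊x * (N : ℝ) ^ α⌋₊
  positivity

lemma wright_anti {α β x y : ℝ} (h0 : 0 < α) (h1 : α < 1) (hβ : α ≤ β) (hx : 0 ≤ x)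
    (hxy : x ≤ y) : wright (-α) β (-y) ≤ wright (-α) β (-x) := by
  have hβ0 : 0 ≤ β := by linarith
  refine le_of_tendsto_of_tendsto' (wb_limit h0 h1 hβ0 (hx.trans hxy) _
    (floor_tendsto h0 (hx.trans hxy))) (wb_limit h0 h1 hβ0 hx _ (floor_tendsto h0 hx)) fun N => ?_
  have : ⌊x * (N : ℝ) ^ α⌋₊ ≤ ⌊y * (N : ℝ) ^ α⌋₊ := Nat.floor_le_floor (by gcongr)
  have := wb_antitone h0 h1 hβ N this
  simp only at this
  gcongr

lemma wright_lc {α β x y t : ℝ} (h0 : 0 < α) (h1 : α < 1) (hβ : α ≤ β) (hx : 0 ≤ x)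
    (hxy : x < y) (ht0 : 0 < t) (ht1 : t < 1) :
    wright (-α) β (-x) ^ (1 - t) * wright (-α) β (-y) ^ t ≤
      wright (-α) β (-((1 - t) * x + t * y)) := by
  have hβ0 : 0 ≤ β := by linarith
  have hy : 0 ≤ y := by linarith
  set z := (1 - t) * x + t * y with hz
  have hxz : x < z := by nlinarith
  have hzy : z < y := by nlinarith
  have hz0 : 0 ≤ z := by linarith
  have fx := floor_tendsto h0 hx
  have fy := floor_tendsto h0 hy
  have fz := floor_tendsto h0 hz0
  set nx : ℕ → ℕ := fun N => ⌊x * (N : ℝ) ^ α⌋₊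
  set ny : ℕ → ℕ := fun N => ⌊y * (N : ℝ) ^ α⌋₊
  set nz : ℕ → ℕ := fun N => ⌊z * (N : ℝ) ^ α⌋₊
  have e1 : (y - z) / (y - x) = 1 - t := by
    rw [div_eq_iff (by linarith)]; rw [hz]; ring
  have e2 : (z - x) / (y - x) = t := by
    rw [div_eq_iff (by linarith)]; rw [hz]; ring
  have l1 := (fy.sub fz).div (fy.sub fx) (by linarith)
  have l2 := (fz.sub fx).div (fy.sub fx) (by linarith)
  rw [e1] at l1
  rw [e2] at l2
  have wx := wb_limit h0 h1 hβ0 hx nx fx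
  have wy := wb_limit h0 h1 hβ0 hy ny fy
  have wz := wb_limit h0 h1 hβ0 hz0 nz fz
  have lim := (wx.rpow l1 (Or.inr (by linarith))).mul (wy.rpow l2 (Or.inr ht0))
  refine le_of_tendsto_of_tendsto lim wz ?_
  have hd := (fy.sub fx).eventually_const_lt (show 0 < y - x by linarith)
  have hlim : Filter.Tendsto (fun N : ℕ => y * (N : ℝ) ^ (-(1 - α))) Filter.atTop (nhds 0) := by
    have := ((tendsto_rpow_neg_atTop (show 0 < 1 - α by linarith)).comp
      tendsto_natCast_atTop_atTop).const_mul y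
    simpa using this
  filter_upwards [Filter.eventually_gt_atTop 0, hd,
      hlim.eventually_le_const (show (0 : ℝ) < 1 by norm_num)] with N hN hd1 hN3
  have hNp : (0 : ℝ) < N := by exact_mod_cast hN
  have pα := Real.rpow_pos_of_pos hNp α
  have hyN : ny N ≤ N := by
    have e3 : (N : ℝ) ^ (-(1 - α)) = (N : ℝ) ^ α / N := by
      rw [neg_sub, Real.rpow_sub hNp, Real.rpow_one]
    rw [e3, mul_div_assoc', div_le_iff₀ hNp, one_mul] at hN3
    exact Nat.floor_le_of_le hN3
  have o1 : nx N ≤ nz N := Nat.floor_le_floor (by gcongr)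
  have o2 : nz N ≤ ny N := Nat.floor_le_floor (by gcongr)
  have hlt : nx N < ny N := by
    rw [← sub_div] at hd1
    have := (div_pos_iff_of_pos_right pα).1 hd1
    have : (nx N : ℝ) < ny N := by linarith
    exact_mod_cast this
  have W := wb_weighted h0 h1 hβ N (nx N) (nz N) (ny N) o1 o2 hlt hyN
  have hdp : (0 : ℝ) < (ny N : ℝ) - nx N := by
    have : (nx N : ℝ) < ny N := by exact_mod_cast hlt
    linarith
  simp only [← sub_div]
  simp only [Pi.div_apply, div_div_div_cancel_right₀ pα.ne']
  have q := Real.rpow_pos_of_pos hNp (1 - β)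
  rw [Real.mul_rpow q.le (wb_nonneg h0 h1 hβ0 N _), Real.mul_rpow q.le (wb_nonneg h0 h1 hβ0 N _)]
  set p1 := ((ny N : ℝ) - nz N) / (ny N - nx N)
  set p2 := ((nz N : ℝ) - nx N) / (ny N - nx N)
  have hp : p1 + p2 = 1 := by
    rw [← add_div, div_eq_one_iff_eq hdp.ne']; ring
  calc _ = (((N : ℝ) ^ (1 - β)) ^ p1 * ((N : ℝ) ^ (1 - β)) ^ p2) *
        (wb α β (nx N) N ^ p1 * wb α β (ny N) N ^ p2) := by ring
    _ = (N : ℝ) ^ (1 - β) * (wb α β (nx N) N ^ p1 * wb α β (ny N) N ^ p2) := by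
      rw [← Real.rpow_add q, hp, Real.rpow_one]
    _ ≤ _ := by gcongr

lemma wright_suff {α β : ℝ} (h0 : 0 < α) (h1 : α < 1) (hβ : α ≤ β) :
    LogConcaveOn' (fun t => wright (-α) β (-Real.exp t)) Set.univ := by
  intro a _ b _ t ht
  have hβ0 : 0 ≤ β := by linarith
  simp only [ge_iff_le]
  rcases ht.1.eq_or_lt with rfl | ht0
  · simp
  rcases ht.2.eq_or_lt with rfl | ht1
  · simp
  have key : wright (-α) β (-Real.exp a) ^ (1 - t) * wright (-α) β (-Real.exp b) ^ t ≤
      wright (-α) β (-((1 - t) * Real.exp a + t * Real.exp b)) := by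
    rcases lt_trichotomy a b with hab | hab | hab
    · exact wright_lc h0 h1 hβ (Real.exp_pos a).le (Real.exp_lt_exp.2 hab) ht0 ht1
    · subst hab
      have := wright_nonneg h0 h1 hβ0 (Real.exp_pos a).le
      rw [← Real.rpow_add_of_nonneg this (by linarith) ht0.le]
      have e : (1 - t) * Real.exp a + t * Real.exp a = Real.exp a := by ring
      rw [e]; simp
    · have := wright_lc h0 h1 hβ (Real.exp_pos b).le (Real.exp_lt_exp.2 hab)
        (show 0 < 1 - t by linarith) (by linarith)
      rw [sub_sub_cancel] at this
      rw [mul_comm, add_comm]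
      exact this
  refine key.trans (wright_anti h0 h1 hβ (Real.exp_pos _).le ?_)
  have := convexOn_exp.2 (Set.mem_univ a) (Set.mem_univ b) (show 0 ≤ 1 - t by linarith) ht0.le
    (by ring)
  simpa [smul_eq_mul] using this

lemma wright_summable {α β : ℝ} (h0 : 0 < α) (h1 : α < 1) (hβ : 0 ≤ β) (x : ℝ) :
    Summable fun n : ℕ => x ^ n / ((n.factorial : ℝ) * Real.Gamma (β + -α * n)) := by
  refine Summable.of_norm_bounded_eventually_nat
    (wdom_summable (y := |x| + 1) h0 h1 hβ (by positivity)) ?_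
  filter_upwards [Filter.eventually_ge_atTop ⌈β / α⌉₊] with j hj
  have h := Nat.le_of_ceil_le hj
  rw [div_le_iff₀ h0] at h
  have hs : 0 ≤ α * j - β := by linarith
  have b := abs_inv_gamma_neg_le hs
  have G := Real.Gamma_pos_of_pos (show 0 < 1 + (α * j - β) by linarith)
  rw [neg_sub] at b
  rw [show β + -α * j = β - α * j by ring, div_eq_mul_inv, mul_inv, Real.norm_eq_abs, abs_mul,
    abs_mul, abs_pow, abs_of_nonneg (show 0 ≤ ((j.factorial : ℝ))⁻¹ by positivity)]
  unfold wdom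
  have two : (1 : ℝ) ≤ 2 ^ (1 + (α * j - β)) := Real.one_le_rpow (by norm_num) (by linarith)
  have hx : |x| ^ j ≤ (|x| + 1) ^ j := by gcongr; linarith
  calc |x| ^ j * ((j.factorial : ℝ)⁻¹ * |(Real.Gamma (β - α * j))⁻¹|)
      ≤ (|x| + 1) ^ j * ((j.factorial : ℝ)⁻¹ * Real.Gamma (1 + (α * j - β))) := by gcongr
    _ = 1 * Real.Gamma (1 + (α * j - β)) * ((|x| + 1) ^ j / (j.factorial : ℝ)) := by
      rw [div_eq_mul_inv]; ring
    _ ≤ _ := by gcongr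

lemma wright_zero_eq {α : ℝ} (h0 : 0 < α) (h1 : α < 1) (x : ℝ) :
    wright (-α) 0 (-x) = α * x * wright (-α) (1 - α) (-x) := by
  unfold wright
  rw [(wright_summable h0 h1 le_rfl (-x)).tsum_eq_zero_add, ← tsum_mul_left]
  simp only [Nat.cast_zero, mul_zero, add_zero, Real.Gamma_zero, div_zero, zero_add]
  refine tsum_congr fun n => ?_
  have hw : -α * ((n + 1 : ℕ) : ℝ) ≠ 0 := by
    have : (0 : ℝ) < ((n + 1 : ℕ) : ℝ) := by positivity
    exact mul_ne_zero (by linarith) this.ne'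
  have e : 1 - α + -α * n = -α * ((n + 1 : ℕ) : ℝ) + 1 := by push_cast; ring
  rw [e, Real.Gamma_add_one hw, pow_succ, Nat.factorial_succ]
  push_cast
  have hn : (n : ℝ) + 1 ≠ 0 := by positivity
  have hf : (n.factorial : ℝ) ≠ 0 := by positivity
  by_cases hG : Real.Gamma (-α * ((n : ℝ) + 1)) = 0
  · rw [hG]; simp
  · field_simp

lemma wright_expand {α β : ℝ} (h0 : 0 < α) (h1 : α < 1) (hβ : 0 ≤ β) :
    ∃ H : ℝ → ℝ, Filter.Tendsto H (nhds 0) (nhds (-(Real.Gamma (β - α))⁻¹)) ∧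
      ∀ x, wright (-α) β (-x) = (Real.Gamma β)⁻¹ + x * H x := by
  set d : ℕ → ℝ := fun j => ((j.factorial : ℝ) * Real.Gamma (β + -α * j))⁻¹ with hd
  have hs : ∀ x : ℝ, Summable fun j : ℕ => x ^ j * d j := fun x => by
    simpa [hd, div_eq_mul_inv] using wright_summable h0 h1 hβ x
  refine ⟨fun x => ∑' j : ℕ, -((-x) ^ j * d (j + 1)), ?_, ?_⟩
  · have hb : Summable fun j : ℕ => |d (j + 1)| := by
      have := (summable_nat_add_iff 1).2 (hs 1)
      simpa using this.abs
    have := tendsto_tsum_of_dominated_convergence (𝓕 := nhds (0 : ℝ))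
      (f := fun (x : ℝ) (j : ℕ) => -((-x) ^ j * d (j + 1)))
      (g := fun j : ℕ => -((-0) ^ j * d (j + 1))) hb ?_ ?_
    · have e : ∑' j : ℕ, -((-0 : ℝ) ^ j * d (j + 1)) = -(Real.Gamma (β - α))⁻¹ := by
        rw [tsum_eq_single 0]
        · simp [hd, sub_eq_add_neg]
        · intro j hj; simp [hj]
      rwa [e] at this
    · intro j
      have : Continuous fun x : ℝ => -((-x) ^ j * d (j + 1)) := by fun_prop
      exact this.tendsto 0
    · have : ∀ᶠ x : ℝ in nhds 0, |x| < 1 := by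
        have := Metric.ball_mem_nhds (0 : ℝ) one_pos
        filter_upwards [this] with x hx
        simpa using hx
      filter_upwards [this] with x hx j
      rw [norm_neg, Real.norm_eq_abs, abs_mul, abs_pow, abs_neg]
      have := pow_le_one₀ (n := j) (abs_nonneg x) hx.le
      have h2 := abs_nonneg (d (j + 1))
      nlinarith
  · intro x
    have e : wright (-α) β (-x) = ∑' j : ℕ, (-x) ^ j * d j := by
      simp [wright, hd, div_eq_mul_inv]
    rw [e, (hs (-x)).tsum_eq_zero_add, ← tsum_mul_left]
    congr 1
    · simp [hd]
    · refine tsum_congr fun j => ?_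
      ring

lemma wright_not {α β C κ : ℝ} (h1 : α < 1) (hβ : 0 < β) (hβα : β < α) (hC : 0 < C) :
    ¬ LogConcaveOn' (fun t => C * Real.exp (κ * t) * wright (-α) β (-Real.exp t)) Set.univ := by
  intro hlc
  have h0 : 0 < α := by linarith
  obtain ⟨H, hH, hF⟩ := wright_expand h0 h1 hβ.le
  set F : ℝ → ℝ := fun x => wright (-α) β (-x) with hFdef
  set a := (Real.Gamma β)⁻¹ with ha
  set b := -(Real.Gamma (β - α))⁻¹ with hb
  have hapos : 0 < a := inv_pos.2 (Real.Gamma_pos_of_pos hβ)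
  have hbpos : 0 < b := by
    have h := Real.Gamma_add_one (s := β - α) (by linarith)
    have := Real.Gamma_pos_of_pos (show 0 < β - α + 1 by linarith)
    rw [h] at this
    have : Real.Gamma (β - α) < 0 := by
      by_contra hc
      push Not at hc
      nlinarith
    rw [hb, neg_pos]
    exact inv_lt_zero.2 this
  have t1 : Filter.Tendsto (fun x : ℝ => x) (nhdsWithin 0 (Set.Ioi 0)) (nhds 0) :=
    Filter.tendsto_id.mono_left nhdsWithin_le_nhds
  have t2 : Filter.Tendsto (fun x : ℝ => x / 2) (nhdsWithin 0 (Set.Ioi 0)) (nhds 0) := by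
    simpa using t1.div_const 2
  have t3 : Filter.Tendsto (fun x : ℝ => 2 * x) (nhdsWithin 0 (Set.Ioi 0)) (nhds 0) := by
    simpa using t1.const_mul 2
  have H1 := hH.comp t1
  have H2 := hH.comp t2
  have H3 := hH.comp t3
  have D : Filter.Tendsto (fun x : ℝ => a * (2 * H x - H (x / 2) / 2 - 2 * H (2 * x)) +
      x * (H x ^ 2 - H (x / 2) * H (2 * x))) (nhdsWithin 0 (Set.Ioi 0))
      (nhds (a * (2 * b - b / 2 - 2 * b) + 0 * (b ^ 2 - b * b))) :=
    ((((H1.const_mul 2).sub (H2.div_const 2)).sub (H3.const_mul 2)).const_mul a).add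
      (t1.mul ((H1.pow 2).sub (H2.mul H3)))
  have e2 : ∀ᶠ x : ℝ in nhdsWithin 0 (Set.Ioi 0), 0 < F (x / 2) := by
    have : Filter.Tendsto (fun x : ℝ => a + x / 2 * H (x / 2)) (nhdsWithin 0 (Set.Ioi 0))
      (nhds (a + 0 * b)) := (t2.mul H2).const_add a
    filter_upwards [this.eventually_const_lt (show 0 < a + 0 * b by simpa using hapos)] with x hx
    simp only [hFdef]
    rw [hF]; exact hx
  have e3 : ∀ᶠ x : ℝ in nhdsWithin 0 (Set.Ioi 0), 0 < F (2 * x) := by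
    have : Filter.Tendsto (fun x : ℝ => a + 2 * x * H (2 * x)) (nhdsWithin 0 (Set.Ioi 0))
      (nhds (a + 0 * b)) := (t3.mul H3).const_add a
    filter_upwards [this.eventually_const_lt (show 0 < a + 0 * b by simpa using hapos)] with x hx
    simp only [hFdef]
    rw [hF]; exact hx
  have e4 : ∀ᶠ x : ℝ in nhdsWithin 0 (Set.Ioi 0), 0 < x := self_mem_nhdsWithin
  have e5 := D.eventually_lt_const
    (show a * (2 * b - b / 2 - 2 * b) + 0 * (b ^ 2 - b * b) < 0 by nlinarith [mul_pos hapos hbpos])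
  obtain ⟨x, p2, p3, px, pD⟩ := (e2.and (e3.and (e4.and e5))).exists
  have hlt : F x ^ 2 < F (x / 2) * F (2 * x) := by
    simp only [hFdef]
    rw [hF, hF, hF]
    nlinarith [mul_neg_of_pos_of_neg px pD]
  have key := hlc (Real.log (x / 2)) (Set.mem_univ _) (Real.log (2 * x)) (Set.mem_univ _) (1 / 2)
    ⟨by norm_num, by norm_num⟩
  have em : (1 - 1 / 2) * Real.log (x / 2) + 1 / 2 * Real.log (2 * x) = Real.log x := by
    rw [Real.log_div px.ne' (by norm_num), Real.log_mul (by norm_num) px.ne']; ring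
  simp only [em, Real.exp_log px, Real.exp_log (show 0 < x / 2 by linarith),
    Real.exp_log (show 0 < 2 * x by linarith)] at key
  set A := C * Real.exp (κ * Real.log (x / 2)) * wright (-α) β (-(x / 2)) with hA
  set B := C * Real.exp (κ * Real.log (2 * x)) * wright (-α) β (-(2 * x)) with hB
  have hAp : 0 < A := by
    have : 0 < wright (-α) β (-(x / 2)) := p2
    positivity
  have hBp : 0 < B := by
    have : 0 < wright (-α) β (-(2 * x)) := p3
    positivity
  have sq := pow_le_pow_left₀ (by positivity) key 2
  have er : (A ^ (1 - 1 / 2 : ℝ) * B ^ (1 / 2 : ℝ)) ^ 2 = A * B := by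
    rw [show (1 - 1 / 2 : ℝ) = 1 / 2 by norm_num, mul_pow, ← Real.sqrt_eq_rpow,
      ← Real.sqrt_eq_rpow, Real.sq_sqrt hAp.le, Real.sq_sqrt hBp.le]
  rw [er] at sq
  have ee : Real.exp (κ * Real.log (x / 2)) * Real.exp (κ * Real.log (2 * x)) =
      Real.exp (κ * Real.log x) ^ 2 := by
    rw [← Real.exp_add, ← Real.exp_nat_mul]
    congr 1
    push_cast
    rw [← em]; ring
  have eAB : A * B = C ^ 2 * Real.exp (κ * Real.log x) ^ 2 * (F (x / 2) * F (2 * x)) := by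
    rw [← ee]; simp only [hA, hB, hFdef]; ring
  have eX : (C * Real.exp (κ * Real.log x) * wright (-α) β (-x)) ^ 2 =
      C ^ 2 * Real.exp (κ * Real.log x) ^ 2 * F x ^ 2 := by
    simp only [hFdef]; ring
  rw [eAB, eX] at sq
  have hpos : 0 < C ^ 2 * Real.exp (κ * Real.log x) ^ 2 := by positivity
  exact absurd (le_of_mul_le_mul_left sq hpos) (not_le.2 hlt)

end Proof

/-- Proposition 1: for `α ∈ (0,1)` and `β ≥ 0`, `t ↦ φ(-α, β, -e^t)` is log-concave on
`ℝ` iff `β ≥ α`, or `β = 0` and `α ≤ 1/2` (multiplicative strong unimodality of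
`M_{α,β}`). -/
theorem wright_msu_iff (α β : ℝ) (hα : α ∈ Set.Ioo (0 : ℝ) 1) (hβ : 0 ≤ β) :
    LogConcaveOn' (fun t => wright (-α) β (-Real.exp t)) Set.univ ↔
      (α ≤ β ∨ (β = 0 ∧ α ≤ 1/2)) := by
  obtain ⟨h0, h1⟩ := hα
  rcases hβ.eq_or_lt with rfl | hβp
  · have e : (fun t => wright (-α) 0 (-Real.exp t)) =
        fun t => α * Real.exp (1 * t) * wright (-α) (1 - α) (-Real.exp t) := by
      funext t
      rw [wright_zero_eq h0 h1, one_mul]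
    constructor
    · intro h
      right
      refine ⟨rfl, ?_⟩
      by_contra hc
      push Not at hc
      rw [e] at h
      exact wright_not h1 (show 0 < 1 - α by linarith) (by linarith) h0 h
    · rintro (h | ⟨_, h⟩)
      · linarith
      · rw [e]
        intro a _ b _ t ht
        have key := wright_suff h0 h1 (show α ≤ 1 - α by linarith) a (Set.mem_univ _) b
          (Set.mem_univ _) t ht
        simp only [ge_iff_le, one_mul] at key ⊢
        have na := wright_nonneg h0 h1 (show 0 ≤ 1 - α by linarith) (Real.exp_pos a).le
        have nb := wright_nonneg h0 h1 (show 0 ≤ 1 - α by linarith) (Real.exp_pos b).le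
        have pa : 0 < α * Real.exp a := by positivity
        have pb : 0 < α * Real.exp b := by positivity
        have ep : (α * Real.exp a) ^ (1 - t) * (α * Real.exp b) ^ t =
            α * Real.exp ((1 - t) * a + t * b) := by
          rw [Real.mul_rpow h0.le (Real.exp_pos a).le, Real.mul_rpow h0.le (Real.exp_pos b).le,
            ← Real.exp_mul, ← Real.exp_mul, Real.exp_add, mul_comm a, mul_comm b]
          calc _ = (α ^ (1 - t) * α ^ t) * (Real.exp ((1 - t) * a) * Real.exp (t * b)) := by ring
            _ = _ := by rw [← Real.rpow_add h0]; simp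
        rw [Real.mul_rpow pa.le na, Real.mul_rpow pb.le nb]
        calc _ = ((α * Real.exp a) ^ (1 - t) * (α * Real.exp b) ^ t) *
              (wright (-α) (1 - α) (-Real.exp a) ^ (1 - t) *
                wright (-α) (1 - α) (-Real.exp b) ^ t) := by ring
          _ ≤ _ := by
            rw [ep]
            gcongr
  · constructor
    · intro h
      left
      by_contra hc
      push Not at hc
      refine wright_not (C := 1) (κ := 0) h1 hβp hc one_pos ?_
      simpa using h
    · rintro (h | ⟨h, _⟩)
      · exact wright_suff h0 h1 h
      · linarith
end
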